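/- (Karrass–Magnus–Solitar 1960, torsion elements) Let A be a type, let r be a nontrivial, cyclically reduced element of FreeGroup A that is not a proper power, and let n ≥ 2. In the one-relator group G = ⟨A | rⁿ = 1⟩, every element of finite order is conjugate to a power of the image of r in G; that is, if g ∈ G satisfies g^k = 1 for some k ≥ 1, then there exist h ∈ G and an integer i with g = h · (image of r)^i · h⁻¹. -/

import Mathlib

/-- A word over `A` is cyclically reduced if its first and last letters are not
mutually inverse; an element of the free group is cyclically reduced if its
reduced word is. -/
def FreeGroup.CyclicallyReduced {A : Type*} [DecidableEq A] (w : FreeGroup A) : Prop :=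
  ∀ x : A × Bool, w.toWord.head? = some x → w.toWord.getLast? ≠ some (x.1, !x.2)

namespace OneRel


section HNN
open HNNExtension HNNExtension.NormalWord
variable {G : Type*} [Group G] {A B : Subgroup G} {φ : A ≃* B}

/-- Product of a list of pairs `(u, g)`, each standing for `t ^ u * g`. -/
def lp (φ : A ≃* B) (L : List (ℤˣ × G)) : HNNExtension G A B φ :=
  (L.map fun x => (t ^ (x.1 : ℤ) * of x.2 : HNNExtension G A B φ)).prod

theorem lp_nil : lp φ [] = 1 := rfl
theorem lp_cons (a : ℤˣ × G) (L) : lp φ (a :: L) = t ^ (a.1 : ℤ) * of a.2 * lp φ L := by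
  simp [lp]
theorem lp_append (L M : List (ℤˣ × G)) : lp φ (L ++ M) = lp φ L * lp φ M := by
  simp [lp]

theorem exists_lp (g : HNNExtension G A B φ) : ∃ h L, g = of h * lp φ L := by
  classical
  obtain ⟨d⟩ := TransversalPair.nonempty G A B
  let w := NormalWord.equiv φ d g
  have : w.prod φ = g := (NormalWord.equiv φ d).left_inv g
  exact ⟨w.head, w.toList, this.symm⟩

theorem lp_base (h : G) (L : List (ℤˣ × G)) (hL : L ≠ []) :
    ∃ M : List (ℤˣ × G), M ≠ [] ∧ M.length = L.length ∧ lp φ L * of h = lp φ M := by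
  rcases List.eq_nil_or_concat L with rfl | ⟨L', b, rfl⟩
  · exact absurd rfl hL
  · refine ⟨L' ++ [(b.1, b.2 * h)], by simp, by simp, ?_⟩
    simp [lp_append, lp_cons, lp_nil, mul_assoc]

theorem pinch (u : ℤˣ) (x : G) (hx : x ∈ toSubgroup A B u) :
    ∃ z : G, (t ^ (u : ℤ) * of x * t ^ (((-u : ℤˣ)) : ℤ) : HNNExtension G A B φ) = of z := by
  rcases Int.units_eq_one_or u with rfl | rfl
  · refine ⟨φ ⟨x, hx⟩, ?_⟩
    have := equiv_eq_conj (φ := φ) ⟨x, hx⟩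
    simp [this]
  · refine ⟨φ.symm ⟨x, hx⟩, ?_⟩
    have := equiv_symm_eq_conj (φ := φ) ⟨x, hx⟩
    simp [this]

/-- Torsion elements of an HNN extension are conjugate into the base group. -/
theorem hnn_torsion (g : HNNExtension G A B φ) (k : ℕ) (hk : 1 ≤ k) (hg : g ^ k = 1) :
    ∃ p h, g = p * of h * p⁻¹ := by
  classical
  by_contra hcon
  push Not at hcon
  -- conjugate to a list product
  have key : ∀ p h (L : List (ℤˣ × G)), g = p * (of h * lp φ L) * p⁻¹ →
      ∃ q M, M.length = L.length ∧ M ≠ [] ∧ g = q * lp φ M * q⁻¹ := by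
    intro p h L hL
    by_cases hn : L = []
    · subst hn
      exact absurd (by simpa [lp_nil] using hL) (hcon p h)
    · obtain ⟨M, hM, hlen, hprod⟩ := lp_base (φ := φ) h L hn
      refine ⟨p * of h, M, hlen, hM, ?_⟩
      rw [hL, ← hprod]; group
  have hex : ∃ n, ∃ q, ∃ M : List (ℤˣ × G), M.length = n ∧ M ≠ [] ∧ g = q * lp φ M * q⁻¹ := by
    obtain ⟨h, L, hL⟩ := exists_lp g
    obtain ⟨q, M, h1, h2, h3⟩ := key 1 h L (by simpa using hL)
    exact ⟨_, q, M, rfl, h2, h3⟩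
  let n := Nat.find hex
  have hmin : ∀ q M, M ≠ [] → g = q * lp φ M * q⁻¹ → n ≤ M.length := fun q M h1 h2 =>
    Nat.find_min' hex ⟨q, M, rfl, h1, h2⟩
  have hchain : ∀ q M, M.length = n → g = q * lp φ M * q⁻¹ →
      M.IsChain (fun a b => a.2 ∈ toSubgroup A B a.1 → a.1 = b.1) := by
    intro q M hMn hM
    rw [List.isChain_iff_forall_rel_of_append_cons_cons]
    intro a b L1 L2 hsplit ha
    by_contra hab
    have hb : b.1 = -a.1 := by
      rcases Int.units_eq_one_or a.1 with h1 | h1 <;> rcases Int.units_eq_one_or b.1 with h2 | h2 <;>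
        simp_all
    obtain ⟨z, hz⟩ := pinch (φ := φ) a.1 a.2 ha
    have : g = (q * lp φ L1) * (of (z * b.2) * lp φ (L2 ++ L1)) * (q * lp φ L1)⁻¹ := by
      rw [hM, hsplit, lp_append, lp_cons, lp_cons, lp_append, map_mul, ← hz, hb]; group
    obtain ⟨q', M', h1, h2, h3⟩ := key _ _ _ this
    have := hmin q' M' h2 h3
    rw [h1, ← hMn, hsplit] at this
    simp at this
    omega
  obtain ⟨q, M, hMn, hMne, hM⟩ := Nat.find_spec hex
  have hc1 := hchain q M hMn hM
  have hjunc : ∀ x ∈ M.getLast?, ∀ y ∈ M.head?, (x.2 ∈ toSubgroup A B x.1 → x.1 = y.1) := by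
    intro x hx y hy
    rcases List.eq_nil_or_concat M with h | ⟨L', b, h⟩
    · exact absurd h hMne
    · subst h
      simp at hx
      subst hx
      rcases L' with _ | ⟨a, L''⟩
      · simp at hy; subst hy; simp
      · simp at hy
        subst hy
        have := hchain (q * lp φ (a :: L'')) (b :: a :: L'') (by simpa using hMn)
          (by rw [hM, List.concat_eq_append, lp_append, lp_cons b, lp_cons b, lp_nil]; group)
        exact (List.isChain_cons_cons.1 this).1
  have hpow : ∀ j : ℕ, ∃ N : List (ℤˣ × G), N.head? = M.head? ∧ lp φ N = lp φ M ^ (j+1) ∧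
      N.IsChain (fun a b => a.2 ∈ toSubgroup A B a.1 → a.1 = b.1) := by
    intro j
    induction j with
    | zero => exact ⟨M, rfl, by simp, hc1⟩
    | succ j ih =>
      obtain ⟨N, h1, h2, h3⟩ := ih
      refine ⟨M ++ N, ?_, ?_, ?_⟩
      · rcases M with _ | ⟨a, M⟩
        · exact absurd rfl hMne
        · simp
      · rw [lp_append, h2, ← pow_succ']
      · rw [List.isChain_append]
        exact ⟨hc1, h3, by rw [h1]; exact hjunc⟩
  obtain ⟨N, h1, h2, h3⟩ := hpow (k-1)
  have hone : lp φ M ^ k = 1 := by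
    have : (q * lp φ M * q⁻¹) ^ k = 1 := by rw [← hM]; exact hg
    rw [conj_pow] at this
    simpa using this
  rw [Nat.sub_add_cancel hk, hone] at h2
  let w : ReducedWord G A B := ⟨1, N, h3⟩
  have := ReducedWord.toList_eq_nil_of_mem_of_range φ w (by
    have : w.prod φ = 1 := by
      have : w.prod φ = of 1 * lp φ N := rfl
      rw [this, h2]; simp
    rw [this]; exact one_mem _)
  have hN : N = [] := this
  rw [hN] at h1
  rcases M with _ | ⟨a, M⟩
  · exact hMne rfl
  · simp at h1
end HNN




section Amalgam
open Monoid Monoid.PushoutI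
variable {C H : Type*} [Group C] [Group H] {φ : Bool → H →* C}

/-- Product of a list of letters in the amalgam of two copies of `C`. -/
def pl (φ : Bool → H →* C) (L : List (Σ _ : Bool, C)) :
    PushoutI (G := fun _ : Bool => C) φ :=
  (L.map fun x => PushoutI.of (G := fun _ : Bool => C) (φ := φ) x.1 x.2).prod

theorem pl_nil : pl φ [] = 1 := rfl
theorem pl_cons (a : Σ _ : Bool, C) (L) : pl φ (a :: L) =
    PushoutI.of (G := fun _ : Bool => C) (φ := φ) a.1 a.2 * pl φ L := by
  simp [pl]
theorem pl_append (L M : List (Σ _ : Bool, C)) : pl φ (L ++ M) = pl φ L * pl φ M := by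
  simp [pl]
theorem pl_inv (L : List (Σ _ : Bool, C)) :
    pl φ (L.reverse.map fun x => ⟨x.1, x.2⁻¹⟩) = (pl φ L)⁻¹ := by
  induction L with
  | nil => simp [pl_nil]
  | cons a L ih => 
    rw [List.reverse_cons, List.map_append, pl_append, ih, List.map_cons, List.map_nil,
      pl_cons, pl_cons, pl_nil]
    simp

theorem pl_reduced (hφ : ∀ i, Function.Injective (φ i)) (L : List (Σ _ : Bool, C))
    (h1 : L.IsChain fun x y => x.1 ≠ y.1) (h2 : ∀ x ∈ L, x.2 ∉ (φ x.1).range)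
    (h3 : pl φ L ∈ (base (G := fun _ : Bool => C) φ).range) : L = [] := by
  let w : CoprodI.Word (fun _ : Bool => C) := ⟨L, fun x hx h => h2 x hx (by rw [h]; exact one_mem _), h1⟩
  have hw : Reduced φ w := h2
  have h4 : ofCoprodI (φ := φ) w.prod = pl φ L := by
    simp only [CoprodI.Word.prod, pl, map_list_prod, List.map_map, w]
    rfl
  have := hw.eq_empty_of_mem_range hφ (by rw [h4]; exact h3)
  exact congrArg CoprodI.Word.toList this

theorem exists_pl (u : PushoutI (G := fun _ : Bool => C) φ) : ∃ L, u = pl φ L := by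
  induction u using PushoutI.induction_on with
  | of i g => exact ⟨[⟨i, g⟩], by simp [pl]⟩
  | base h => exact ⟨[⟨true, φ true h⟩], by simp [pl, of_apply_eq_base]⟩
  | mul x y hx hy =>
    obtain ⟨L, rfl⟩ := hx
    obtain ⟨M, rfl⟩ := hy
    exact ⟨L ++ M, (pl_append _ _).symm⟩

/-- Elements of the first factor not conjugate into the amalgamated subgroup can only be
conjugated into the first factor by elements of the first factor. -/
theorem amalgam_conj (hφ : ∀ i, Function.Injective (φ i)) (c c' : C)
    (hc : ∀ y : C, y * c * y⁻¹ ∉ (φ true).range) (u : PushoutI (G := fun _ : Bool => C) φ)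
    (h : u * of (G := fun _ : Bool => C) true c * u⁻¹ = of (G := fun _ : Bool => C) true c') :
    ∃ y, u = of (G := fun _ : Bool => C) true y := by
  classical
  let o : Bool → C →* PushoutI (G := fun _ : Bool => C) φ := 
    fun i => of (G := fun _ : Bool => C) (φ := φ) i
  have hbase : ∀ i j x, o i (φ i x) = o j (φ j x) := by
    intro i j x
    exact (of_apply_eq_base (G := fun _ : Bool => C) φ i x).trans 
      (of_apply_eq_base (G := fun _ : Bool => C) φ j x).symm
  have plc : ∀ (i : Bool) (g : C) L, pl φ (⟨i, g⟩ :: L) = o i g * pl φ L := fun i g L => pl_cons _ _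
  change u * o true c * u⁻¹ = o true c' at h
  have hex : ∃ n, ∃ y0 y, ∃ L : List (Σ _ : Bool, C), L.length = n ∧ 
      u = o true y0 * pl φ L * o true y := by
    obtain ⟨L, hL⟩ := exists_pl u
    exact ⟨_, 1, 1, L, rfl, by simpa using hL⟩
  obtain ⟨y0, y, L, hLn, hL⟩ := Nat.find_spec hex
  have hmin : ∀ y0 y (M : List (Σ _ : Bool, C)), u = o true y0 * pl φ M * o true y → 
      L.length ≤ M.length := fun y0 y M h2 => by
    rw [hLn]; exact Nat.find_min' hex ⟨y0, y, M, rfl, h2⟩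
  have h2 : ∀ x ∈ L, x.2 ∉ (φ x.1).range := by
    rintro ⟨i, g⟩ hx ⟨z, hz⟩
    change φ i z = g at hz
    subst hz
    obtain ⟨L1, L2, rfl⟩ := List.append_of_mem hx
    rcases L2 with _ | ⟨⟨j, g⟩, L2⟩
    · have := hmin y0 (φ true z * y) L1 (by
        rw [hL, pl_append, plc, pl_nil, hbase i true, map_mul]; group)
      simp at this
    · have := hmin y0 y (L1 ++ ⟨j, φ j z * g⟩ :: L2) (by
        rw [hL, pl_append, pl_append, plc, plc, plc, hbase i j, map_mul]; group)
      simp at this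
  have h1 : L.IsChain fun x y => x.1 ≠ y.1 := by
    rw [List.isChain_iff_forall_rel_of_append_cons_cons]
    rintro ⟨i, g⟩ ⟨j, g'⟩ L1 L2 hsplit (rfl : i = j)
    have := hmin y0 y (L1 ++ ⟨i, g * g'⟩ :: L2) (by
        rw [hL, hsplit, pl_append, pl_append, plc, plc, plc, map_mul]; group)
    rw [hsplit] at this
    simp at this
  have h3 : ∀ x ∈ L.head?, x.1 = false := by
    rintro ⟨i, g⟩ hx
    rcases L with _ | ⟨a, L⟩
    · simp at hx
    · simp at hx
      subst hx
      by_contra hi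
      simp at hi
      subst hi
      have := hmin (y0 * g) y L (by rw [hL, plc, map_mul]; group)
      simp at this
  have h4 : ∀ x ∈ L.getLast?, x.1 = false := by
    rintro ⟨i, g⟩ hx
    rcases List.eq_nil_or_concat L with rfl | ⟨L, a, rfl⟩
    · simp at hx
    · simp at hx
      subst hx
      by_contra hi
      simp at hi
      subst hi
      have := hmin y0 (g * y) L (by rw [hL, List.concat_eq_append, pl_append, plc, pl_nil, map_mul]; group)
      simp at this
  by_cases hnil : L = []
  · subst hnil
    exact ⟨y0 * y, by rw [hL, pl_nil, map_mul]; simp [o]⟩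
  exfalso
  let Li : List (Σ _ : Bool, C) := L.reverse.map fun x => ⟨x.1, x.2⁻¹⟩
  let K : List (Σ _ : Bool, C) := L ++ ⟨true, y * c * y⁻¹⟩ :: Li
  have hK1 : pl φ K = o true (y0⁻¹ * c' * y0) := by
    have : pl φ Li = (pl φ L)⁻¹ := pl_inv L
    simp only [K]
    rw [pl_append, plc, this]
    simp only [map_mul, map_inv]
    rw [← h, hL]; group
  have hLi1 : Li.IsChain fun x y => x.1 ≠ y.1 := by
    rw [List.isChain_map, List.isChain_reverse]
    simpa [flip, ne_comm] using h1
  have hLi2 : ∀ x ∈ Li.head?, x.1 = false := by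
    intro x hx
    simp only [Li, List.head?_map, List.head?_reverse, Option.mem_def, Option.map_eq_some_iff] at hx
    obtain ⟨a, ha, rfl⟩ := hx
    exact h4 a ha
  have hLi3 : ∀ x ∈ Li.getLast?, x.1 = false := by
    intro x hx
    simp only [Li, List.getLast?_map, List.getLast?_reverse, Option.mem_def, Option.map_eq_some_iff] at hx
    obtain ⟨a, ha, rfl⟩ := hx
    exact h3 a ha
  have hLi4 : ∀ x ∈ Li, x.2 ∉ (φ x.1).range := by
    intro x hx
    simp only [Li, List.mem_map, List.mem_reverse] at hx
    obtain ⟨a, ha, rfl⟩ := hx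
    simpa using h2 a ha
  have hK2 : K.IsChain fun x y => x.1 ≠ y.1 := by
    simp only [K]
    rw [List.isChain_append, List.isChain_cons]
    refine ⟨h1, ⟨fun x hx => ?_, hLi1⟩, fun x hx z hz => ?_⟩
    · rw [hLi2 x hx]; simp
    · simp at hz; subst hz; rw [h4 x hx]; simp
  have hK3 : ∀ x ∈ K, x.2 ∉ (φ x.1).range := by
    intro x hx
    simp only [K, List.mem_append, List.mem_cons] at hx
    rcases hx with hx | rfl | hx
    · exact h2 x hx
    · exact hc y
    · exact hLi4 x hx
  by_cases hb : (y0⁻¹ * c' * y0) ∈ (φ true).range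
  · obtain ⟨z, hz⟩ := hb
    have := pl_reduced hφ K hK2 hK3 (by
      rw [hK1, ← hz]
      exact ⟨z, (of_apply_eq_base (G := fun _ : Bool => C) φ true z).symm⟩)
    simp [K] at this
  · have := pl_reduced hφ (K ++ [⟨true, (y0⁻¹ * c' * y0)⁻¹⟩]) (by
      rw [List.isChain_append]
      refine ⟨hK2, by simp, fun x hx z hz => ?_⟩
      simp at hz; subst hz
      have hne : Li ≠ [] := by simp [Li, hnil]
      have : K.getLast? = Li.getLast? := by
        simp only [K]
        rw [List.getLast?_append, List.getLast?_cons]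
        obtain ⟨l, hl⟩ := Option.ne_none_iff_exists'.1 (mt List.getLast?_eq_none_iff.1 hne)
        simp [hl]
      rw [this] at hx
      rw [hLi3 x hx]; simp) (by
      intro x hx
      simp only [List.mem_append, List.mem_singleton] at hx
      rcases hx with hx | rfl
      · exact hK3 x hx
      · rw [inv_mem_iff]; exact hb) (by
      rw [pl_append, hK1, plc, pl_nil, map_inv]
      simp)
    simp at this
end Amalgam

section Basic
open FreeGroup (of mk invRev one_eq_mk mul_mk)
open Subgroup (normalClosure normalClosure_normal subset_normalClosure normalClosure_le_normal)
universe u v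

open Classical in
/-- The endomorphism of the free group killing the letter `c`. -/
noncomputable def kill {A : Type u} (c : A) : FreeGroup A →* FreeGroup A :=
  FreeGroup.lift fun z => if z = c then 1 else FreeGroup.of z

theorem kill_of_self {A : Type u} (c : A) : kill c (of c) = 1 := by simp [kill]
theorem kill_of_ne {A : Type u} {c z : A} (h : z ≠ c) : kill c (of z) = of z := by simp [kill, h]

/-- `c` occurs essentially in `w`: no conjugate of `w` avoids `c`. -/
def Ess {A : Type u} (c : A) (w : FreeGroup A) : Prop :=
  ∀ u : FreeGroup A, kill c (u * w * u⁻¹) ≠ u * w * u⁻¹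

/-- The Freiheitssatz for the relator `w`. -/
def Frei {A : Type u} (w : FreeGroup A) : Prop :=
  ∀ c : A, Ess c w → ∀ v, kill c v = v → v ∈ normalClosure {w} → v = 1

/-- The torsion theorem for the relator `w`. -/
def Tor {A : Type u} (w : FreeGroup A) : Prop :=
  ∀ (g : FreeGroup A) (k : ℕ), 1 ≤ k → g ^ k ∈ normalClosure {w} →
    ∃ s h : FreeGroup A, s * w = w * s ∧ h * g * h⁻¹ * s⁻¹ ∈ normalClosure {w}

theorem mk_cons {A : Type u} (p : A × Bool) (L : List (A × Bool)) :
    (mk (p :: L) : FreeGroup A) = mk [p] * mk L := by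
  simp [mul_mk]

theorem mk_single {A : Type u} (p : A × Bool) :
    (mk [p] : FreeGroup A) = if p.2 then of p.1 else (of p.1)⁻¹ := by
  rcases p with ⟨a, _ | _⟩ <;> simp [of, invRev]

theorem hom_eq_on {A : Type u} {M : Type v} [Group M] (f g : FreeGroup A →* M)
    (L : List (A × Bool)) (h : ∀ p ∈ L, f (of p.1) = g (of p.1)) : f (mk L) = g (mk L) := by
  induction L with
  | nil => simp [← one_eq_mk]
  | cons p L ih =>
    rw [mk_cons, map_mul, map_mul, ih fun q hq => h q (List.mem_cons_of_mem _ hq), mk_single]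
    have := h p List.mem_cons_self
    split <;> simp [this]

theorem kill_eq_self {A : Type u} (c : A) (L : List (A × Bool)) (h : ∀ p ∈ L, p.1 ≠ c) :
    kill c (mk L) = mk L :=
  hom_eq_on (kill c) (MonoidHom.id _) L fun p hp => kill_of_ne (h p hp)

open Classical in
theorem kill_mk {A : Type u} (c : A) (L : List (A × Bool)) :
    kill c (mk L) = mk (L.filter fun p => p.1 ≠ c) := by
  induction L with
  | nil => simp [← one_eq_mk]
  | cons p L ih =>
    rw [mk_cons, map_mul, ih, mk_single, List.filter_cons]
    by_cases h : p.1 = c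
    · subst h
      split <;> simp [kill_of_self]
    · simp only [ne_eq, h, not_false_eq_true, decide_true, if_true]
      rw [mk_cons p, mk_single]
      split <;> simp [kill_of_ne h]

theorem Ess.mem {A : Type u} {c : A} {L : List (A × Bool)} (h : Ess c (mk L)) :
    ∃ p ∈ L, p.1 = c := by
  by_contra hcon
  push Not at hcon
  exact h 1 (by simpa using kill_eq_self c L hcon)

/-- If `L` has minimal length in its conjugacy class, then all its letters are essential. -/
theorem ess_of_min {A : Type u} {c : A} {L : List (A × Bool)}
    (hmin : ∀ (u : FreeGroup A) (M : List (A × Bool)), mk M = u * mk L * u⁻¹ → L.length ≤ M.length)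
    (hc : ∃ p ∈ L, p.1 = c) : Ess c (mk L) := by
  classical
  intro u hu
  rw [map_mul, map_mul, map_inv, kill_mk] at hu
  have h1 := hmin ((kill c u)⁻¹ * u) (L.filter fun p => p.1 ≠ c) (by
    calc _ = (kill c u)⁻¹ * (kill c u * mk (L.filter fun p => p.1 ≠ c) * (kill c u)⁻¹) * kill c u := by group
      _ = _ := by rw [hu]; group)
  have h2 := List.length_filter_lt_length_iff_exists (p := fun p : A × Bool => decide (p.1 ≠ c)) (l := L)
  obtain ⟨p, hp, hpc⟩ := hc
  have h3 := h2.2 ⟨p, hp, by simp [hpc]⟩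
  omega

theorem exists_min {A : Type u} (L : List (A × Bool)) :
    ∃ (u : FreeGroup A) (M : List (A × Bool)), mk M = u * mk L * u⁻¹ ∧ M.length ≤ L.length ∧
      ∀ (v : FreeGroup A) (K : List (A × Bool)), mk K = v * mk M * v⁻¹ → M.length ≤ K.length := by
  classical
  have hex : ∃ n, ∃ (u : FreeGroup A) (M : List (A × Bool)), mk M = u * mk L * u⁻¹ ∧ M.length = n :=
    ⟨_, 1, L, by simp, rfl⟩
  obtain ⟨u, M, h1, h2⟩ := Nat.find_spec hex
  refine ⟨u, M, h1, ?_, ?_⟩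
  · rw [h2]; exact Nat.find_min' hex ⟨1, L, by simp, rfl⟩
  · intro v K hK
    rw [h2]
    exact Nat.find_min' hex ⟨v * u, K, by rw [hK, h1]; group, rfl⟩

theorem kill_map {A A' : Type u} (j : A → A') (c : A') (h : ∀ y, j y ≠ c) (x : FreeGroup A) :
    kill c (FreeGroup.map j x) = FreeGroup.map j x := by
  have : (kill c).comp (FreeGroup.map j) = FreeGroup.map j := by
    ext y; simp [kill_of_ne (h y)]
  exact DFunLike.congr_fun this x

theorem map_nc {G G' : Type*} [Group G] [Group G'] (f : G →* G') {w v : G}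
    (hv : v ∈ normalClosure {w}) {N : Subgroup G'} [N.Normal] (hw : f w ∈ N) : f v ∈ N := by
  have : normalClosure {w} ≤ N.comap f := normalClosure_le_normal (by simpa using hw)
  exact this hv

theorem mem_nc {G : Type*} [Group G] (w : G) : w ∈ normalClosure {w} := subset_normalClosure rfl

theorem map_nc_one {G G' : Type*} [Group G] [Group G'] (f : G →* G') {w v : G}
    (hv : v ∈ normalClosure {w}) (hw : f w = 1) : f v = 1 := by
  have := map_nc f hv (N := ⊥) (by simpa using hw)
  simpa using this

theorem nc_conj {G : Type*} [Group G] (u w : G) : normalClosure {u * w * u⁻¹} = normalClosure {w} := by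
  apply le_antisymm
  · exact normalClosure_le_normal (by simpa using normalClosure_normal.conj_mem _ (mem_nc w) u)
  · refine normalClosure_le_normal ?_
    have := normalClosure_normal.conj_mem _ (mem_nc (u * w * u⁻¹)) u⁻¹
    simp only [Set.singleton_subset_iff, SetLike.mem_coe]
    convert this using 1; group

theorem Ess.conj {A : Type u} {c : A} {w : FreeGroup A} (u : FreeGroup A) (h : Ess c (u * w * u⁻¹)) :
    Ess c w := by
  intro x hx
  refine h (x * u⁻¹) ?_
  have : x * u⁻¹ * (u * w * u⁻¹) * (x * u⁻¹)⁻¹ = x * w * x⁻¹ := by group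
  rw [this, hx]

theorem Frei.conj {A : Type u} {w : FreeGroup A} (u : FreeGroup A) (h : Frei w) :
    Frei (u * w * u⁻¹) := by
  intro c hc v hv hvn
  rw [nc_conj] at hvn
  exact h c hc.conj v hv hvn

theorem Tor.conj {A : Type u} {w : FreeGroup A} (u : FreeGroup A) (h : Tor w) :
    Tor (u * w * u⁻¹) := by
  intro g k hk hg
  rw [nc_conj] at hg ⊢
  obtain ⟨s, y, hs, hy⟩ := h g k hk hg
  refine ⟨u * s * u⁻¹, u * y, ?_, ?_⟩
  · calc _ = u * (s * w) * u⁻¹ := by group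
      _ = _ := by rw [hs]; group
  · convert normalClosure_normal.conj_mem _ hy u using 1; group

theorem frei_one {A : Type u} : Frei (1 : FreeGroup A) := fun c hc => absurd (by simp) (hc 1)
theorem tor_one {A : Type u} : Tor (1 : FreeGroup A) := by
  intro g k hk hg
  have : g ^ k = 1 := by simpa using map_nc_one (MonoidHom.id _) hg rfl
  have : g = 1 := (pow_eq_one_iff_left (by omega)).1 this
  exact ⟨1, 1, by simp, by simp [this]⟩
end Basic


section Package
open FreeGroup (of mk)
open Subgroup (normalClosure normalClosure_normal subset_normalClosure normalClosure_le_normal)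
universe u
variable {B : Type u}

/-- Rewriting back: the letter `(b, i)` stands for `t ^ i * b * t ^ (-i)`. -/
noncomputable def unroll : FreeGroup (B × ℤ) →* FreeGroup (Option B) :=
  FreeGroup.lift fun p => of none ^ p.2 * of (some p.1) * (of none ^ p.2)⁻¹

theorem unroll_of (b : B) (i : ℤ) :
    unroll (of (b, i)) = of none ^ i * of (some b) * (of none ^ i)⁻¹ := by simp [unroll]

/-- Letters of the base group. -/
abbrev XT (a : B) (m M : ℤ) : Type u := {p : B × ℤ // p.1 = a → m ≤ p.2 ∧ p.2 ≤ M}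
/-- Letters of the associated subgroup. -/
abbrev YT (a : B) (m M : ℤ) : Type u := {p : B × ℤ // p.1 = a → m ≤ p.2 ∧ p.2 + 1 ≤ M}

theorem hnn_package (a : B) (m M : ℤ) (hmM : m ≤ M) (W : FreeGroup (XT a m M)) (hF : Frei W)
    (e1 : Ess (⟨(a, m), fun _ => ⟨le_rfl, hmM⟩⟩ : XT a m M) W)
    (e2 : Ess (⟨(a, M), fun _ => ⟨hmM, le_rfl⟩⟩ : XT a m M) W) :
    ∃ (P : Type u) (_ : Group P) (Φ : FreeGroup (Option B) →* P) (ι : FreeGroup (XT a m M) →* P)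
      (Ψ : P →* FreeGroup (Option B) ⧸ normalClosure {unroll (FreeGroup.map Subtype.val W)}),
      (∀ x, ι x = 1 → x ∈ normalClosure {W}) ∧
      (ι W = 1) ∧
      (∀ x, Φ (unroll (FreeGroup.map Subtype.val x)) = ι x) ∧
      (∀ x, Ψ (Φ x) = QuotientGroup.mk' _ x) ∧
      (∀ (p : P) (k : ℕ), 1 ≤ k → p ^ k = 1 → ∃ y x, p = y * ι x * y⁻¹) := by
  let H := FreeGroup (XT a m M) ⧸ normalClosure {W}
  let q : FreeGroup (XT a m M) →* H := QuotientGroup.mk' _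
  have hq : ∀ x, q x = 1 → x ∈ normalClosure {W} := fun x hx => (QuotientGroup.eq_one_iff x).1 hx
  let jK : YT a m M → XT a m M := fun y => ⟨y.1, fun h => ⟨(y.2 h).1, by have := (y.2 h).2; omega⟩⟩
  let jL : YT a m M → XT a m M := fun y => ⟨(y.1.1, y.1.2 + 1), fun h => ⟨by have := (y.2 h).1; simp only; omega, (y.2 h).2⟩⟩
  have jKi : Function.Injective jK := by
    intro x y h
    exact Subtype.ext (congrArg (fun z => z.1) h)
  have jLi : Function.Injective jL := by
    intro x y h
    have h1 := congrArg (fun z => z.1.1) h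
    have h2 := congrArg (fun z => z.1.2) h
    simp only [jL] at h1 h2
    exact Subtype.ext (Prod.ext h1 (by omega))
  let fK : FreeGroup (YT a m M) →* H := q.comp (FreeGroup.map jK)
  let fL : FreeGroup (YT a m M) →* H := q.comp (FreeGroup.map jL)
  have hK : Function.Injective fK := by
    rw [injective_iff_map_eq_one]
    intro x hx
    have h1 := hF _ e2 (FreeGroup.map jK x) (kill_map _ _ (by
      intro y hy
      have h1 := congrArg (fun z => z.1) hy
      simp only [jK] at h1
      have h2 := (y.2 (by rw [h1])).2
      rw [h1] at h2
      simp at h2) x) (hq _ hx)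
    exact (injective_iff_map_eq_one _).1 (FreeGroup.map_injective jKi) _ h1
  have hL : Function.Injective fL := by
    rw [injective_iff_map_eq_one]
    intro x hx
    have h1 := hF _ e1 (FreeGroup.map jL x) (kill_map _ _ (by
      intro y hy
      have h1 := congrArg (fun z => z.1) hy
      simp only [jL, Prod.mk.injEq] at h1
      have h2 := (y.2 h1.1).1
      omega) x) (hq _ hx)
    exact (injective_iff_map_eq_one _).1 (FreeGroup.map_injective jLi) _ h1
  let φ : fK.range ≃* fL.range := (MonoidHom.ofInjective hK).symm.trans (MonoidHom.ofInjective hL)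
  have hφ : ∀ x, (φ ⟨fK x, x, rfl⟩ : H) = fL x := by
    intro x
    have : (⟨fK x, x, rfl⟩ : fK.range) = MonoidHom.ofInjective hK x := rfl
    rw [this]
    simp only [φ, MulEquiv.trans_apply, MulEquiv.symm_apply_apply]
    rfl
  let P := HNNExtension H fK.range fL.range φ
  let ι : FreeGroup (XT a m M) →* P := HNNExtension.of.comp q
  let t : P := HNNExtension.t
  let xm : B → XT a m M := fun b => ⟨(b, m), fun _ => ⟨le_rfl, hmM⟩⟩
  have hshift : ∀ y : YT a m M, t * ι (of (jK y)) = ι (of (jL y)) * t := by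
    intro y
    have h1 := HNNExtension.t_mul_of (φ := φ) ⟨fK (of y), of y, rfl⟩
    rw [hφ] at h1
    exact h1
  have hlev : ∀ (b : B) (i : ℤ) (h : b = a → m ≤ i ∧ i ≤ M),
      t ^ (i - m) * ι (of (xm b)) * (t ^ (i - m))⁻¹ = ι (of ⟨(b, i), h⟩) := by
    intro b i
    rcases le_total m i with hi | hi
    · induction i, hi using Int.leInduction with
      | base => intro h; simp [xm]
      | succ i hi ih =>
        intro h
        have h2 := ih fun hb => ⟨hi, by have := (h hb).2; omega⟩
        have h3 := hshift ⟨(b, i), fun hb => ⟨hi, (h hb).2⟩⟩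
        have h4 : t ^ (i + 1 - m) = t * t ^ (i - m) := by
          rw [← zpow_one_add]; congr 1; ring
        rw [h4, mul_inv_rev]
        calc _ = t * (t ^ (i - m) * ι (of (xm b)) * (t ^ (i - m))⁻¹) * t⁻¹ := by group
          _ = _ := by
            rw [h2, mul_inv_eq_iff_eq_mul]
            exact h3
    · induction i, hi using Int.leInductionDown with
      | base => intro h; simp [xm]
      | pred i hi ih =>
        intro h
        have hb : b ≠ a := fun hb => by have := (h hb).1; omega
        have h2 := ih fun h => absurd h hb
        have h3 := hshift ⟨(b, i - 1), fun h => absurd h hb⟩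
        have h4 : t ^ (i - m) = t * t ^ (i - 1 - m) := by
          rw [← zpow_one_add]; congr 1; ring
        have h5 : t * (t ^ (i - 1 - m) * ι (of (xm b)) * (t ^ (i - 1 - m))⁻¹) = 
            t * ι (of ⟨(b, i - 1), h⟩) := by
          refine Eq.trans ?_ h3.symm
          have h6 : jL ⟨(b, i - 1), fun h => absurd h hb⟩ = ⟨(b, i), fun h => absurd h hb⟩ := by
            simp [jL]
          rw [h6, ← h2, h4]; group
        exact mul_left_cancel h5
  let Φ : FreeGroup (Option B) →* P := FreeGroup.lift fun o =>
    o.elim t fun b => t ^ (-m) * ι (of (xm b)) * (t ^ (-m))⁻¹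
  have hΦ : ∀ x, Φ (unroll (FreeGroup.map Subtype.val x)) = ι x := by
    intro x
    have : (Φ.comp unroll).comp (FreeGroup.map Subtype.val) = ι := by
      ext ⟨⟨b, i⟩, h⟩
      have h1 := hlev b i h
      rw [← h1, sub_eq_add_neg, zpow_add]
      simp only [MonoidHom.comp_apply, FreeGroup.map.of, unroll_of, map_mul, map_inv, map_zpow,
        Φ, FreeGroup.lift_apply_of, Option.elim]
      group
    exact DFunLike.congr_fun this x
  let N := normalClosure {unroll (FreeGroup.map Subtype.val W)}
  let r : FreeGroup (XT a m M) →* FreeGroup (Option B) := unroll.comp (FreeGroup.map Subtype.val)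
  let ψ0 : H →* FreeGroup (Option B) ⧸ N := QuotientGroup.lift (normalClosure {W})
    ((QuotientGroup.mk' N).comp r) (by
      intro x hx
      exact (QuotientGroup.eq_one_iff _).2 (map_nc r hx (mem_nc _)))
  have hψ0 : ∀ x, ψ0 (q x) = QuotientGroup.mk' N (r x) := fun x => rfl
  let Ψ : P →* FreeGroup (Option B) ⧸ N := HNNExtension.lift ψ0 (QuotientGroup.mk' N (of none)) (by
    rintro ⟨_, x, rfl⟩
    rw [hφ]
    change _ * ψ0 (q _) = ψ0 (q _) * _
    rw [hψ0, hψ0, ← map_mul, ← map_mul]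
    congr 1
    rw [← mul_inv_eq_iff_eq_mul, ← MulAut.conj_apply]
    have : ((MulAut.conj (of none)).toMonoidHom.comp r).comp (FreeGroup.map jK) 
        = r.comp (FreeGroup.map jL) := by
      ext ⟨⟨b, i⟩, h⟩
      simp only [r, jK, jL, MonoidHom.comp_apply, FreeGroup.map.of, unroll_of, MulEquiv.coe_toMonoidHom,
        MulAut.conj_apply]
      rw [add_comm, zpow_one_add]; group
    exact DFunLike.congr_fun this x)
  have hΨt : Ψ t = QuotientGroup.mk' N (of none) := HNNExtension.lift_t _ _ _
  have hΨι : ∀ x, Ψ (ι x) = QuotientGroup.mk' N (r x) := fun x => HNNExtension.lift_of _ _ _ _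
  refine ⟨P, inferInstance, Φ, ι, Ψ, ?_, ?_, hΦ, ?_, ?_⟩
  · intro x hx
    refine hq x (HNNExtension.of_injective (φ := φ) ?_)
    rw [map_one]; exact hx
  · have : q W = 1 := (QuotientGroup.eq_one_iff _).2 (mem_nc W)
    change HNNExtension.of (q W) = 1
    rw [this, map_one]
  · intro x
    have : Ψ.comp Φ = QuotientGroup.mk' N := by
      ext o
      rcases o with _ | b
      · simpa [Φ] using hΨt
      · simp only [Φ, MonoidHom.comp_apply, FreeGroup.lift_apply_of, Option.elim, map_mul, map_zpow, map_inv,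
          hΨt, hΨι]
        simp only [← map_mul, ← map_zpow, ← map_inv]
        congr 1
        simp only [r, xm, MonoidHom.comp_apply, FreeGroup.map.of, unroll_of]
        group
    exact DFunLike.congr_fun this x
  · intro p k hk hp
    obtain ⟨y, h, hh⟩ := hnn_torsion p k hk hp
    obtain ⟨x, rfl⟩ := QuotientGroup.mk'_surjective _ h
    exact ⟨y, x, hh⟩
end Package


section Step
open FreeGroup (of mk)
open Subgroup (normalClosure normalClosure_normal subset_normalClosure normalClosure_le_normal)
open scoped SemidirectProduct
universe u
variable {B : Type u}

/-- The shift action on letters. -/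
def shiftEquiv (B : Type u) (n : ℤ) : B × ℤ ≃ B × ℤ where
  toFun p := (p.1, p.2 + n)
  invFun p := (p.1, p.2 - n)
  left_inv p := by simp
  right_inv p := by simp

/-- The shift action of the integers on the free group. -/
def shiftHom (B : Type u) : Multiplicative ℤ →* MulAut (FreeGroup (B × ℤ)) where
  toFun n := FreeGroup.freeGroupCongr (shiftEquiv B n.toAdd)
  map_one' := by
    ext x
    change FreeGroup.map (fun p : B × ℤ => (p.1, p.2 + (0 : ℤ))) x = x
    simp
  map_mul' n k := by
    ext x
    change FreeGroup.map (fun p : B × ℤ => (p.1, p.2 + (n.toAdd + k.toAdd))) x =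
      FreeGroup.map (fun p : B × ℤ => (p.1, p.2 + n.toAdd)) (FreeGroup.map (fun p => (p.1, p.2 + k.toAdd)) x)
    rw [FreeGroup.map.comp]
    congr 2
    funext p
    simp only [Function.comp, Prod.mk.injEq, true_and]; ring

theorem shiftHom_apply (n : Multiplicative ℤ) (x : FreeGroup (B × ℤ)) :
    shiftHom B n x = FreeGroup.map (fun p : B × ℤ => (p.1, p.2 + n.toAdd)) x := rfl

/-- The rewriting homomorphism. -/
def roll : FreeGroup (Option B) →* FreeGroup (B × ℤ) ⋊[shiftHom B] Multiplicative ℤ :=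
  FreeGroup.lift fun o => o.elim (SemidirectProduct.inr (Multiplicative.ofAdd 1))
    fun b => SemidirectProduct.inl (of (b, 0))

theorem roll_none : roll (of (none : Option B)) = SemidirectProduct.inr (Multiplicative.ofAdd 1) := by
  simp [roll]
theorem roll_some (b : B) : roll (of (some b)) = SemidirectProduct.inl (of (b, 0)) := by
  simp [roll]

theorem unroll_roll (v : FreeGroup (Option B)) :
    unroll (roll v).left * of none ^ (roll v).right.toAdd = v := by
  let f : FreeGroup (B × ℤ) ⋊[shiftHom B] Multiplicative ℤ →* FreeGroup (Option B) :=
    SemidirectProduct.lift unroll (zpowersHom _ (of none)) (by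
      intro n
      ext ⟨b, i⟩
      simp only [MonoidHom.comp_apply, MulEquiv.coe_toMonoidHom, shiftHom_apply, FreeGroup.map.of,
        unroll_of, MulAut.conj_apply, zpowersHom_apply]
      rw [add_comm, zpow_add]; group)
  have h : f.comp roll = MonoidHom.id _ := by
    ext o
    rcases o with _ | b
    · simp [roll_none, f]
    · simp [roll_some, f, unroll_of]
  have := DFunLike.congr_fun h v
  simpa [f, SemidirectProduct.lift] using this

theorem roll_unroll_right (x : FreeGroup (B × ℤ)) : (roll (unroll x)).right = 1 := by
  have : ((SemidirectProduct.rightHom).comp roll).comp (unroll (B := B)) = 1 := by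
    ext ⟨b, i⟩
    simp [unroll_of, roll_none, roll_some]
  exact DFunLike.congr_fun this x

theorem kill_val {A : Type u} {p : A → Prop} (c : {z // p z}) (x : FreeGroup {z // p z}) :
    FreeGroup.map Subtype.val (kill c x) = kill c.1 (FreeGroup.map Subtype.val x) := by
  have : (FreeGroup.map Subtype.val).comp (kill c) = (kill c.1).comp (FreeGroup.map Subtype.val) := by
    ext z
    by_cases h : z = c
    · subst h; simp [kill_of_self]
    · have h' : z.1 ≠ c.1 := fun h2 => h (Subtype.ext h2)
      simp [kill_of_ne h, kill_of_ne h']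
  exact DFunLike.congr_fun this x

theorem hnn_step (L' : List ((B × ℤ) × Bool))
    (IH : ∀ (X : Type u) (M : List (X × Bool)), M.length ≤ L'.length → Frei (mk M) ∧ Tor (mk M)) :
    Frei (unroll (mk L')) ∧ Tor (unroll (mk L')) := by
  classical
  obtain ⟨u0, L, hL, hlen, hmin⟩ := exists_min L'
  suffices h : Frei (unroll (mk L)) ∧ Tor (unroll (mk L)) by
    have h2 : unroll (mk L') = (unroll u0)⁻¹ * unroll (mk L) * ((unroll u0)⁻¹)⁻¹ := by
      rw [hL]; simp only [map_mul, map_inv]; group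
    rw [h2]
    exact ⟨h.1.conj _, h.2.conj _⟩
  by_cases hnil : L = []
  · subst hnil
    rw [← FreeGroup.one_eq_mk, map_one]
    exact ⟨frei_one, tor_one⟩
  have core : ∀ a, (∃ p ∈ L, p.1.1 = a) → ∃ (m M : ℤ) (_ : m ≤ M) (W : List (XT a m M × Bool)),
      FreeGroup.map Subtype.val (mk W) = mk L ∧ Frei (mk W) ∧ Tor (mk W) ∧
      (∀ p ∈ L, p.1.1 = a → m ≤ p.1.2 ∧ p.1.2 ≤ M) ∧
      (∀ x : XT a m M, (∃ p ∈ L, p.1 = x.1) → Ess x (mk W)) ∧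
      (∃ p ∈ L, p.1 = (a, m)) ∧ (∃ p ∈ L, p.1 = (a, M)) := by
    rintro a ⟨p0, hp0, ha0⟩
    let S : Finset ℤ := ((L.filter fun p => p.1.1 = a).map fun p => p.1.2).toFinset
    have hS : ∀ i, i ∈ S ↔ ∃ p ∈ L, p.1 = (a, i) := by
      intro i
      simp only [S, List.mem_toFinset, List.mem_map, List.mem_filter, decide_eq_true_eq]
      constructor
      · rintro ⟨p, ⟨h1, h2⟩, h3⟩
        exact ⟨p, h1, Prod.ext h2 h3⟩
      · rintro ⟨p, h1, h2⟩
        exact ⟨p, ⟨h1, by rw [h2]⟩, by rw [h2]⟩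
    have hne : S.Nonempty := ⟨p0.1.2, (hS _).2 ⟨p0, hp0, Prod.ext ha0 rfl⟩⟩
    have hmem : ∀ p ∈ L, p.1.1 = a → S.min' hne ≤ p.1.2 ∧ p.1.2 ≤ S.max' hne := by
      intro p hp hpa
      have : p.1.2 ∈ S := (hS _).2 ⟨p, hp, Prod.ext hpa rfl⟩
      exact ⟨S.min'_le _ this, S.le_max' _ this⟩
    refine ⟨S.min' hne, S.max' hne, S.min'_le_max' hne,
      L.pmap (fun p h => (⟨p.1, h⟩, p.2)) hmem, ?_⟩
    have hval : FreeGroup.map Subtype.val (mk (L.pmap (fun p h => ((⟨p.1, h⟩ :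
        XT a (S.min' hne) (S.max' hne)), p.2)) hmem)) = mk L := by
      rw [FreeGroup.map.mk, List.map_pmap]
      congr 1
      simp
    have hfr := IH (XT a (S.min' hne) (S.max' hne))
      (L.pmap (fun p h => (⟨p.1, h⟩, p.2)) hmem) (by rw [List.length_pmap]; exact hlen)
    refine ⟨hval, hfr.1, hfr.2, hmem, ?_, (hS _).1 (S.min'_mem hne), (hS _).1 (S.max'_mem hne)⟩
    intro x hx u hu
    refine ess_of_min hmin hx (FreeGroup.map Subtype.val u) ?_
    have := congrArg (FreeGroup.map Subtype.val) hu
    rw [kill_val] at this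
    simpa only [map_mul, map_inv, hval] using this
  constructor
  · intro c hc v hv hvN
    rcases c with _ | a
    · -- the stable letter
      have htwo : ∃ p ∈ L, ∃ p' ∈ L, p.1.2 ≠ p'.1.2 := by
        by_contra hcon
        push Not at hcon
        obtain ⟨p0, hp0⟩ := List.exists_mem_of_ne_nil L hnil
        refine hc (of none ^ p0.1.2)⁻¹ ?_
        let f := (MulAut.conj ((of none ^ p0.1.2)⁻¹ : FreeGroup (Option B))).toMonoidHom.comp unroll
        refine hom_eq_on ((kill none).comp f) f L ?_
        intro p hp
        have h1 : f (of p.1) = of (some p.1.1) := by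
          have := hcon p hp p0 hp0
          rcases p with ⟨⟨b, i⟩, e⟩
          simp only at this
          simp only [f, MonoidHom.comp_apply, MulEquiv.coe_toMonoidHom, MulAut.conj_apply, unroll_of, this]
          group
        rw [MonoidHom.comp_apply, h1, kill_of_ne (by simp)]
      obtain ⟨p, hp, p', hp', hpp⟩ := htwo
      obtain ⟨m, M, hmM, W, hW, hF, hT, hmem, hess, h1, h2⟩ := core p.1.1 ⟨p, hp, rfl⟩
      obtain ⟨P, _, Φ, ι, Ψ, hι, hιW, hΦ, -, -⟩ := hnn_package p.1.1 m M hmM (mk W) hF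
        (hess _ h1) (hess _ h2)
      obtain ⟨p1, hp1, hp1m⟩ : ∃ p1 ∈ L, p1.1.2 ≠ m := by
        by_cases h : p.1.2 = m
        · exact ⟨p', hp', fun h' => hpp (by rw [h, h'])⟩
        · exact ⟨p, hp, h⟩
      have hΦv : Φ v = 1 := map_nc_one Φ hvN (by rw [← hW, hΦ, hιW])
      let del : FreeGroup (Option B) →* FreeGroup B := FreeGroup.lift fun o => o.elim 1 of
      have hdel : FreeGroup.map some (del v) = v := by
        have : (FreeGroup.map some).comp del = kill none := by
          ext o
          rcases o with _ | b
          · simp [del, kill_of_self]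
          · simp [del, kill_of_ne]
        exact (DFunLike.congr_fun this v).trans hv
      let xm : B → XT p.1.1 m M := fun b => ⟨(b, m), fun _ => ⟨le_rfl, hmM⟩⟩
      have hxm : ∀ x, unroll (FreeGroup.map Subtype.val (FreeGroup.map xm x)) =
          of none ^ m * FreeGroup.map some x * (of none ^ m)⁻¹ := by
        intro x
        have : (unroll.comp (FreeGroup.map Subtype.val)).comp (FreeGroup.map xm) =
            (MulAut.conj (of none ^ m : FreeGroup (Option B))).toMonoidHom.comp (FreeGroup.map some) := by
          ext b
          simp only [xm, MonoidHom.comp_apply, FreeGroup.map.of, unroll_of, MulEquiv.coe_toMonoidHom,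
            MulAut.conj_apply]
        exact DFunLike.congr_fun this x
      have h3 : FreeGroup.map xm (del v) ∈ normalClosure {mk W} := by
        apply hι
        rw [← hΦ, hxm, hdel, map_mul, map_mul, hΦv]
        simp
      have h4 := hF ⟨p1.1, hmem p1 hp1⟩ (hess _ ⟨p1, hp1, rfl⟩) _ (kill_map xm _ (by
        intro b hb
        exact hp1m (congrArg (fun z => z.1.2) hb).symm) _) h3
      have h5 : Function.Injective xm := by
        intro b b' hb
        exact congrArg (fun z => z.1.1) hb
      have h6 := (injective_iff_map_eq_one _).1 (FreeGroup.map_injective h5) _ h4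
      rw [← hdel, h6, map_one]
    · -- another letter
      have ha : ∃ p ∈ L, p.1.1 = a := by
        by_contra hcon
        push Not at hcon
        refine hc 1 ?_
        rw [one_mul, inv_one, mul_one]
        refine hom_eq_on ((kill (some a)).comp unroll) unroll L ?_
        intro p hp
        have := hcon p hp
        rcases p with ⟨⟨b, i⟩, e⟩
        simp only at this
        simp [unroll_of, kill_of_ne, this]
      obtain ⟨m, M, hmM, W, hW, hF, hT, hmem, hess, h1, h2⟩ := core a ha
      obtain ⟨P, _, Φ, ι, Ψ, hι, hιW, hΦ, -, -⟩ := hnn_package a m M hmM (mk W) hF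
        (hess _ h1) (hess _ h2)
      have hΦv : Φ v = 1 := map_nc_one Φ hvN (by rw [← hW, hΦ, hιW])
      have hright : (roll v).right = 1 :=
        map_nc_one (SemidirectProduct.rightHom.comp roll) hvN (roll_unroll_right _)
      have hv2 : unroll (roll v).left = v := by
        have := unroll_roll v
        rw [hright] at this
        simpa using this
      let κ : FreeGroup (B × ℤ) →* FreeGroup (XT a m M) := FreeGroup.lift fun p =>
        if h : p.1 = a then 1 else of ⟨p, fun h' => absurd h' h⟩
      have hκ1 : ∀ x, unroll (FreeGroup.map Subtype.val (κ x)) = kill (some a) (unroll x) := by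
        intro x
        have : (unroll.comp (FreeGroup.map Subtype.val)).comp κ = (kill (some a)).comp unroll := by
          ext ⟨b, i⟩
          by_cases h : b = a
          · subst h
            simp [κ, unroll_of, kill_of_self]
          · simp [κ, unroll_of, kill_of_ne, h]
        exact DFunLike.congr_fun this x
      have hκ2 : ∀ x, kill (⟨(a, m), fun _ => ⟨le_rfl, hmM⟩⟩ : XT a m M) (κ x) = κ x := by
        intro x
        have : (kill (⟨(a, m), fun _ => ⟨le_rfl, hmM⟩⟩ : XT a m M)).comp κ = κ := by
          ext ⟨b, i⟩
          by_cases h : b = a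
          · simp [κ, h]
          · simp [κ, kill_of_ne, h]
        exact DFunLike.congr_fun this x
      have h3 : κ (roll v).left ∈ normalClosure {mk W} := by
        apply hι
        rw [← hΦ, hκ1, hv2, hv, hΦv]
      have h4 := hF _ (hess _ h1) _ (hκ2 _) h3
      have h5 := hκ1 (roll v).left
      rw [hv2, hv, h4] at h5
      rw [← h5]; simp
  · intro g k hk hg
    obtain ⟨p0, hp0⟩ := List.exists_mem_of_ne_nil L hnil
    obtain ⟨m, M, hmM, W, hW, hF, hT, hmem, hess, h1, h2⟩ := core p0.1.1 ⟨p0, hp0, rfl⟩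
    rw [← hW] at hg ⊢
    obtain ⟨P, _, Φ, ι, Ψ, hι, hιW, hΦ, hΨ, htor⟩ := hnn_package p0.1.1 m M hmM (mk W) hF
      (hess _ h1) (hess _ h2)
    have hΦg : Φ g ^ k = 1 := by
      rw [← map_pow]
      exact map_nc_one Φ hg (by rw [hΦ, hιW])
    obtain ⟨y, x, hyx⟩ := htor _ k hk hΦg
    have hx : ι (x ^ k) = 1 := by
      rw [hyx, conj_pow] at hΦg
      rw [map_pow]
      simpa using hΦg
    obtain ⟨s, h, hs, hh⟩ := hT x k hk (hι _ hx)
    let r : FreeGroup (XT p0.1.1 m M) →* FreeGroup (Option B) := unroll.comp (FreeGroup.map Subtype.val)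
    have hrW : r (mk W) = unroll (FreeGroup.map Subtype.val (mk W)) := rfl
    obtain ⟨y0, hy0⟩ := QuotientGroup.mk'_surjective _ (Ψ y)
    refine ⟨r s, r h * y0⁻¹, ?_, ?_⟩
    · rw [← hrW, ← map_mul, hs, map_mul]
    · let Q := QuotientGroup.mk' (normalClosure {unroll (FreeGroup.map Subtype.val (mk W))})
      have hker : ∀ z, z ∈ normalClosure {unroll (FreeGroup.map Subtype.val (mk W))} ↔ Q z = 1 := fun z =>
        (QuotientGroup.eq_one_iff z).symm
      have hg' : Q g = Q y0 * Q (r x) * (Q y0)⁻¹ := by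
        change Q y0 = Ψ y at hy0
        have h3 : Ψ (ι x) = Q (r x) := by rw [← hΦ, hΨ]; rfl
        rw [hy0, ← h3, ← map_inv, ← map_mul, ← map_mul, ← hyx]
        exact (hΨ g).symm
      have h4 : Q (r (h * x * h⁻¹ * s⁻¹)) = 1 := (hker _).1 (map_nc r hh (by rw [hrW]; exact mem_nc _))
      rw [hker]
      simp only [map_mul, map_inv] at h4 ⊢
      rw [← h4, hg']; group
end Step


section Reduce
open FreeGroup (of mk invRev)
open Subgroup (normalClosure normalClosure_normal subset_normalClosure normalClosure_le_normal)
open scoped SemidirectProduct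
universe u
variable {A B : Type u}

open Classical in
/-- Exponent sum of the letter `c`. -/
noncomputable def ex (c : A) : FreeGroup A →* Multiplicative ℤ :=
  FreeGroup.lift fun z => if z = c then Multiplicative.ofAdd 1 else 1

theorem ex_self (c : A) : ex c (of c) = Multiplicative.ofAdd 1 := by simp [ex]
theorem ex_ne {c z : A} (h : z ≠ c) : ex c (of z) = 1 := by simp [ex, h]

theorem ex_kill (c : A) (v : FreeGroup A) : ex c (kill c v) = 1 := by
  have : (ex c).comp (kill c) = 1 := by
    ext z
    by_cases h : z = c
    · subst h; simp [kill_of_self]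
    · simp [kill_of_ne h, ex_ne h]
  exact DFunLike.congr_fun this v

theorem ess_of_ex {c : A} {w : FreeGroup A} (h : ex c w ≠ 1) : Ess c w := by
  intro u hu
  have := ex_kill c (u * w * u⁻¹)
  rw [hu] at this
  apply h
  simpa using this

open Classical in
theorem length_lemma (τ : FreeGroup A →* FreeGroup (B × ℤ) ⋊[shiftHom B] Multiplicative ℤ) (b : A)
    (h0 : (τ (of b)).left = 1)
    (h1 : ∀ z, ∃ l : List ((B × ℤ) × Bool), l.length ≤ 1 ∧ mk l = (τ (of z)).left)
    (L : List (A × Bool)) :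
    ∃ L' : List ((B × ℤ) × Bool), mk L' = (τ (mk L)).left ∧
      L'.length ≤ (L.filter fun p => p.1 ≠ b).length := by
  have shift : ∀ (n : Multiplicative ℤ) (l : List ((B × ℤ) × Bool)),
      ∃ l' : List ((B × ℤ) × Bool), l'.length = l.length ∧ mk l' = shiftHom B n (mk l) := by
    intro n l
    rw [shiftHom_apply, FreeGroup.map.mk]
    exact ⟨_, by simp, rfl⟩
  have single : ∀ p : A × Bool, ∃ l : List ((B × ℤ) × Bool),
      l.length ≤ (if p.1 = b then 0 else 1) ∧ mk l = (τ (mk [p])).left := by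
    rintro ⟨z, e⟩
    have h1' : ∃ l : List ((B × ℤ) × Bool), l.length ≤ (if z = b then 0 else 1) ∧
        mk l = (τ (of z)).left := by
      by_cases h : z = b
      · subst h
        exact ⟨[], by simp, by rw [h0]; rfl⟩
      · simpa [h] using h1 z
    obtain ⟨l, hl, hl'⟩ := h1'
    rw [mk_single]
    cases e
    · obtain ⟨l', h2, h3⟩ := shift ((τ (of z)).right)⁻¹ (invRev l)
      refine ⟨l', by rw [h2, FreeGroup.invRev_length]; exact hl, ?_⟩
      rw [h3, ← FreeGroup.inv_mk, hl']
      simp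
    · exact ⟨l, hl, by simpa using hl'⟩
  induction L with
  | nil => exact ⟨[], by rw [← FreeGroup.one_eq_mk, ← FreeGroup.one_eq_mk, map_one]; rfl, by simp⟩
  | cons p L ih =>
    obtain ⟨L', h2, h3⟩ := ih
    obtain ⟨l, h4, h5⟩ := single p
    obtain ⟨L'', h6, h7⟩ := shift (τ (mk [p])).right L'
    refine ⟨l ++ L'', ?_, ?_⟩
    · rw [mk_cons, map_mul, SemidirectProduct.mul_left, ← h5, ← h2, ← h7, FreeGroup.mul_mk]
    · rw [List.length_append, List.filter_cons]
      by_cases h : p.1 = b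
      · simp only [h, if_true] at h4
        simp only [h, ne_eq, not_true_eq_false, decide_false, Bool.false_eq_true, if_false]
        simp only [ne_eq] at h3
        omega
      · simp only [h, if_false] at h4
        simp only [h, ne_eq, not_false_eq_true, decide_true, if_true, List.length_cons]
        simp only [ne_eq] at h3
        omega

theorem roll_step (ψ : FreeGroup A →* FreeGroup (Option B)) (b : A) (L : List (A × Bool))
    (hb : ∃ p ∈ L, p.1 = b) (h0 : (roll (ψ (of b))).left = 1)
    (h1 : ∀ z, ∃ l : List ((B × ℤ) × Bool), l.length ≤ 1 ∧ mk l = (roll (ψ (of z))).left)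
    (hr : (roll (ψ (mk L))).right = 1)
    (IH : ∀ (X : Type u) (M : List (X × Bool)), M.length < L.length → Frei (mk M) ∧ Tor (mk M)) :
    Frei (ψ (mk L)) ∧ Tor (ψ (mk L)) := by
  classical
  obtain ⟨L', h2, h3⟩ := length_lemma (roll.comp ψ) b h0 h1 L
  have h4 := unroll_roll (ψ (mk L))
  rw [hr] at h4
  change mk L' = (roll (ψ (mk L))).left at h2
  rw [← h2] at h4
  simp only [toAdd_one, zpow_zero, mul_one] at h4
  rw [← h4]
  refine hnn_step L' fun X M hM => IH X M ?_
  have h5 := List.length_filter_lt_length_iff_exists (p := fun p : A × Bool => decide (p.1 ≠ b)) (l := L)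
  obtain ⟨p, hp, hpb⟩ := hb
  have h6 := h5.2 ⟨p, hp, by simp [hpb]⟩
  omega

theorem zero_case (x : A) (L : List (A × Bool)) (hx : ∃ p ∈ L, p.1 = x) (h0 : ex x (mk L) = 1)
    (IH : ∀ (X : Type u) (M : List (X × Bool)), M.length < L.length → Frei (mk M) ∧ Tor (mk M)) :
    Frei (mk L) ∧ Tor (mk L) := by
  classical
  let jl : A → Option A := fun z => if z = x then none else some z
  let j : FreeGroup A →* FreeGroup (Option A) := FreeGroup.map jl
  let e : FreeGroup (Option A) →* FreeGroup A :=
    FreeGroup.lift fun o => o.elim (of x) fun z => if z = x then 1 else of z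
  have hjx : j (of x) = of none := by simp [j, jl]
  have hjz : ∀ z, z ≠ x → j (of z) = of (some z) := by intro z hz; simp [j, jl, hz]
  have hej : ∀ v, e (j v) = v := by
    intro v
    have : e.comp j = MonoidHom.id _ := by
      ext z
      by_cases h : z = x
      · subst h; simp [hjx, e]
      · simp [hjz z h, e, h]
    exact DFunLike.congr_fun this v
  have key := roll_step j x L hx (by rw [hjx, roll_none]; simp) (by
    intro z
    by_cases h : z = x
    · subst h
      rw [hjx, roll_none]
      exact ⟨[], by simp, by simp [← FreeGroup.one_eq_mk]⟩
    · rw [hjz z h, roll_some]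
      exact ⟨[((z, 0), true)], by simp, by simp [of]⟩) (by
    have : (SemidirectProduct.rightHom.comp roll).comp j = ex x := by
      ext z
      by_cases h : z = x
      · subst h; simp [hjx, roll_none, ex_self]
      · simp [hjz z h, roll_some, ex_ne h]
    exact (DFunLike.congr_fun this _).trans h0) IH
  have hkj : ∀ c v, kill (jl c) (j v) = j (kill c v) := by
    intro c v
    have : (kill (jl c)).comp j = j.comp (kill c) := by
      ext z
      by_cases h : z = c
      · subst h; simp [j, kill_of_self]
      · have : jl z ≠ jl c := by
          simp only [jl]
          split_ifs <;> simp_all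
        simp [j, kill_of_ne this, kill_of_ne h]
    exact DFunLike.congr_fun this v
  have hke : ∀ c v, e (kill (jl c) v) = kill c (e v) := by
    intro c v
    have : e.comp (kill (jl c)) = (kill c).comp e := by
      ext o
      rcases o with _ | z
      · by_cases h : x = c
        · subst h; simp [jl, kill_of_self, e]
        · have h' : none ≠ jl c := by
            simp only [jl]
            split_ifs <;> simp_all
          simp [kill_of_ne h', e, kill_of_ne h]
      · by_cases hzx : z = x
        · have h' : some z ≠ jl c := by
            simp only [jl]
            split_ifs <;> grind
          rw [MonoidHom.comp_apply, MonoidHom.comp_apply, kill_of_ne h']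
          simp [e, hzx]
        · by_cases h : z = c
          · subst h
            simp [jl, hzx, kill_of_self, e]
          · have h' : some z ≠ jl c := by
              simp only [jl]
              split_ifs <;> grind
            simp [kill_of_ne h', e, hzx, kill_of_ne h]
    exact DFunLike.congr_fun this v
  constructor
  · intro c hc v hv hvN
    have h1 := key.1 (jl c) (by
      intro u hu
      have := congrArg e hu
      rw [hke] at this
      simp only [map_mul, map_inv, hej] at this
      exact hc (e u) (by simpa using this)) (j v) (by rw [hkj, hv]) (map_nc j hvN (mem_nc _))
    rw [← hej v, h1, map_one]
  · intro g k hk hg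
    obtain ⟨s, h, h1, h2⟩ := key.2 (j g) k hk (by rw [← map_pow]; exact map_nc j hg (mem_nc _))
    refine ⟨e s, e h, ?_, ?_⟩
    · have := congrArg e h1
      simpa [hej] using this
    · have := map_nc e h2 (N := normalClosure {mk L}) (by rw [hej]; exact mem_nc _)
      simpa [hej] using this

theorem roll_none_zpow (n : ℤ) : roll (of (none : Option B) ^ n) =
    SemidirectProduct.inr (Multiplicative.ofAdd n) := by
  rw [map_zpow, roll_none, ← map_zpow, ← ofAdd_zsmul]; simp

open Classical in
/-- The substitution of Magnus. -/
noncomputable def psi (b c : A) (α β : ℤ) : FreeGroup A →* FreeGroup (Option A) :=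
  FreeGroup.lift fun z => if z = b then of none ^ α else
    if z = c then of (some c) * of none ^ (-β) else of (some z)

theorem psi_b (b c : A) (α β : ℤ) : psi b c α β (of b) = of none ^ α := by simp [psi]
theorem psi_c {b c : A} (h : c ≠ b) (α β : ℤ) :
    psi b c α β (of c) = of (some c) * of none ^ (-β) := by simp [psi, h]
theorem psi_z {b c z : A} (h : z ≠ b) (h' : z ≠ c) (α β : ℤ) :
    psi b c α β (of z) = of (some z) := by simp [psi, h, h']

theorem psi_step {b c : A} (hcb : c ≠ b) (L : List (A × Bool)) (hb : ∃ p ∈ L, p.1 = b)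
    (IH : ∀ (X : Type u) (M : List (X × Bool)), M.length < L.length → Frei (mk M) ∧ Tor (mk M)) :
    Frei (psi b c (ex c (mk L)).toAdd (ex b (mk L)).toAdd (mk L)) ∧
    Tor (psi b c (ex c (mk L)).toAdd (ex b (mk L)).toAdd (mk L)) := by
  set α := (ex c (mk L)).toAdd
  set β := (ex b (mk L)).toAdd
  refine roll_step (psi b c α β) b L hb ?_ ?_ ?_ IH
  · rw [psi_b, roll_none_zpow]; simp
  · intro z
    by_cases h : z = b
    · subst h
      refine ⟨[], by simp, ?_⟩
      rw [psi_b, roll_none_zpow]; simp [← FreeGroup.one_eq_mk]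
    by_cases h' : z = c
    · subst h'
      refine ⟨[((z, 0), true)], by simp, ?_⟩
      rw [psi_c h, map_mul, roll_none_zpow, roll_some]
      simp [of]
    · refine ⟨[((z, 0), true)], by simp, ?_⟩
      rw [psi_z h h', roll_some]
      simp [of]
  · have : (SemidirectProduct.rightHom.comp roll).comp (psi b c α β) = (ex b) ^ α * (ex c) ^ (-β) := by
      ext z
      by_cases h : z = b
      · subst h
        simp only [MonoidHom.comp_apply, psi_b, roll_none_zpow]
        simp [ex_self, ex_ne hcb.symm]
      by_cases h' : z = c
      · subst h'
        simp only [MonoidHom.comp_apply, psi_c h, map_mul roll, roll_none_zpow, roll_some]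
        simp [ex_self, ex_ne h]
      · simp [psi_z h h', roll_some, ex_ne h, ex_ne h']
    refine (DFunLike.congr_fun this _).trans ?_
    apply Multiplicative.toAdd.injective
    simp only [MonoidHom.mul_apply, MonoidHom.zpow_apply, toAdd_mul, toAdd_zpow, toAdd_one]
    change α * β + -β * α = 0
    ring
end Reduce

section AmalgamTwo
open Subgroup (normalClosure normalClosure_normal subset_normalClosure normalClosure_le_normal)
open Monoid (PushoutI)
universe u v v'
variable {C : Type v} [Group C] {D : Type v'} [Group D]

/-- The two embeddings of the infinite cyclic group. -/
def amPhi (x : C) (α : ℤ) : Bool → Multiplicative ℤ →* C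
  | true => zpowersHom C x
  | false => zpowersHom C (x ^ α)

/-- Two copies of `C`, amalgamated along `x = x ^ α`. -/
abbrev Am (x : C) (α : ℤ) : Type _ := PushoutI (G := fun _ : Bool => C) (amPhi x α)

/-- The embeddings of the factors. -/
def am (x : C) (α : ℤ) (i : Bool) : C →* Am x α :=
  PushoutI.of (G := fun _ : Bool => C) (φ := amPhi x α) i

theorem am_rel (x : C) (α : ℤ) : am x α false x ^ α = am x α true x := by
  have h1 := PushoutI.of_apply_eq_base (G := fun _ : Bool => C) (amPhi x α) true (Multiplicative.ofAdd 1)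
  have h2 := PushoutI.of_apply_eq_base (G := fun _ : Bool => C) (amPhi x α) false (Multiplicative.ofAdd 1)
  have h3 := h2.trans h1.symm
  have h4 : amPhi x α true (Multiplicative.ofAdd 1) = x := by simp [amPhi]
  have h5 : amPhi x α false (Multiplicative.ofAdd 1) = x ^ α := by simp [amPhi]
  rw [h4, h5] at h3
  rw [← map_zpow]
  exact h3

theorem amPhi_inj {x : C} {α : ℤ} (hx : ∀ n : ℤ, x ^ n = 1 → n = 0) (hα : α ≠ 0) (i : Bool) :
    Function.Injective (amPhi x α i) := by
  rw [injective_iff_map_eq_one]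
  intro n hn
  apply Multiplicative.toAdd.injective
  cases i
  · have h1 : (x ^ α) ^ n.toAdd = 1 := hn
    rw [← zpow_mul] at h1
    have := hx _ h1
    simp only [mul_eq_zero, hα, false_or] at this
    exact this
  · exact hx _ hn

theorem am_inj {x : C} {α : ℤ} (hx : ∀ n : ℤ, x ^ n = 1 → n = 0) (hα : α ≠ 0) (i : Bool) :
    Function.Injective (am x α i) :=
  PushoutI.of_injective (amPhi_inj hx hα) i

theorem am_conj {x : C} {α : ℤ} (hx : ∀ n : ℤ, x ^ n = 1 → n = 0) (hα : α ≠ 0) (c c' : C)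
    (hc : ∀ (y : C) (n : ℤ), y * c * y⁻¹ ≠ x ^ n) (u : Am x α)
    (h : u * am x α true c * u⁻¹ = am x α true c') : ∃ y, u = am x α true y := by
  refine amalgam_conj (amPhi_inj hx hα) c c' ?_ u h
  rintro y ⟨n, hn⟩
  exact hc y n.toAdd hn.symm

/-- Functoriality of the amalgam. -/
def amMap (q : C →* D) (x : C) (α : ℤ) : Am x α →* Am (q x) α :=
  PushoutI.lift (fun i => (am (q x) α i).comp q)
    (PushoutI.base (G := fun _ : Bool => D) (amPhi (q x) α)) (by
      intro i
      ext
      have h := PushoutI.of_apply_eq_base (G := fun _ : Bool => D) (amPhi (q x) α) i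
        (Multiplicative.ofAdd 1)
      simp only [MonoidHom.comp_apply]
      rw [← h]
      cases i <;> simp [amPhi, am])

theorem amMap_am (q : C →* D) (x : C) (α : ℤ) (i : Bool) (y : C) :
    amMap q x α (am x α i y) = am (q x) α i (q y) := by
  rw [amMap, am, PushoutI.lift_of]; rfl

variable {A : Type u}
open FreeGroup (of mk)

open Classical in
/-- The map from the extension of Magnus to the amalgam. -/
noncomputable def theta (x : C) (f : FreeGroup A →* C) (b c : A) (α β : ℤ) :
    FreeGroup (Option A) →* Am x α :=
  FreeGroup.lift fun o => o.elim (am x α false x) fun z => if z = b then 1 else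
    if z = c then am x α true (f (of c)) * am x α false x ^ β else am x α true (f (of z))

theorem theta_psi {x : C} {f : FreeGroup A →* C} {b c : A} (hcb : c ≠ b) (α β : ℤ)
    (hx : f (of b) = x) (v : FreeGroup A) :
    theta x f b c α β (psi b c α β v) = am x α true (f v) := by
  have : (theta x f b c α β).comp (psi b c α β) = (am x α true).comp f := by
    ext z
    by_cases h : z = b
    · subst h
      simp [psi_b, theta, hx, am_rel]
    by_cases h' : z = c
    · subst h'
      simp [psi_c h, theta, h]
    · simp [psi_z h h', theta, h, h']
  exact DFunLike.congr_fun this v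

theorem amMap_theta (q : C →* D) (x : C) (f : FreeGroup A →* C) (b c : A) (α β : ℤ)
    (v : FreeGroup (Option A)) :
    amMap q x α (theta x f b c α β v) = theta (q x) (q.comp f) b c α β v := by
  have : (amMap q x α).comp (theta x f b c α β) = theta (q x) (q.comp f) b c α β := by
    ext o
    rcases o with _ | z
    · simp [theta, amMap_am]
    · by_cases h : z = b
      · simp [theta, h]
      by_cases h' : z = c
      · subst h'
        simp [theta, h, amMap_am]
      · simp [theta, h, h', amMap_am]
  exact DFunLike.congr_fun this v

theorem of_zpow_eq_one (b : A) (n : ℤ) (h : of b ^ n = 1) : n = 0 := by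
  have := congrArg (ex b) h
  rw [map_zpow, ex_self, map_one (ex b)] at this
  have := congrArg Multiplicative.toAdd this
  simpa using this

theorem ex_pow_ne {b t : A} (h : b ≠ t) (n : ℤ) : ex t (of b ^ n) = 1 := by
  rw [map_zpow, ex_ne h, one_zpow]

theorem frei_main (L : List (A × Bool))
    (IH : ∀ (X : Type u) (M : List (X × Bool)), M.length < L.length → Frei (mk M) ∧ Tor (mk M)) :
    Frei (mk L) := by
  intro c hc v hv hvN
  by_cases h0 : ex c (mk L) = 1
  · exact (zero_case c L hc.mem h0 IH).1 c hc v hv hvN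
  by_cases hb : ∃ p ∈ L, p.1 ≠ c
  · obtain ⟨p, hp, hpc⟩ := hb
    have key := (psi_step (b := p.1) (c := c) (Ne.symm hpc) L ⟨p, hp, rfl⟩ IH).1
    have hα : (ex c (mk L)).toAdd ≠ 0 := fun h => h0 (Multiplicative.toAdd.injective h)
    generalize (ex c (mk L)).toAdd = α at key hα
    generalize (ex p.1 (mk L)).toAdd = β at key
    have hex : ∀ y, ex (some c) (psi p.1 c α β y) = ex c y := by
      intro y
      have : (ex (some c)).comp (psi p.1 c α β) = ex c := by
        ext z
        by_cases h : z = p.1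
        · have h2 : z ≠ c := h ▸ hpc
          rw [MonoidHom.comp_apply, ex_ne h2, h, psi_b, ex_pow_ne (by simp)]
        by_cases h' : z = c
        · subst h'
          rw [MonoidHom.comp_apply, psi_c h, map_mul, ex_pow_ne (by simp), ex_self, ex_self, mul_one]
        · rw [MonoidHom.comp_apply, psi_z h h', ex_ne (by simpa using h'), ex_ne h']
      exact DFunLike.congr_fun this y
    have hkill : ∀ y, kill (some c) (psi p.1 c α β (kill c y)) = psi p.1 c α β (kill c y) := by
      intro y
      have : ((kill (some c)).comp (psi p.1 c α β)).comp (kill c) = (psi p.1 c α β).comp (kill c) := by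
        ext z
        by_cases h' : z = c
        · subst h'
          simp [kill_of_self]
        by_cases h : z = p.1
        · simp only [MonoidHom.comp_apply, kill_of_ne h']
          rw [h, psi_b, map_zpow, kill_of_ne (by simp)]
        · simp only [MonoidHom.comp_apply, kill_of_ne h']
          rw [psi_z h h', kill_of_ne (by simpa using h')]
      exact DFunLike.congr_fun this y
    have h1 := key (some c) (ess_of_ex (by rw [hex]; exact h0)) (psi p.1 c α β v)
      (by have := hkill v; rwa [hv] at this) (map_nc _ hvN (mem_nc _))
    have h2 := theta_psi (f := MonoidHom.id (FreeGroup A)) (Ne.symm hpc) α β rfl v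
    rw [h1, map_one] at h2
    have h3 := am_inj (x := of p.1) (of_zpow_eq_one p.1) hα true
    exact h3 (by rw [map_one]; exact h2.symm)
  · push Not at hb
    have h1 : kill c (mk L) = 1 := hom_eq_on (kill c) 1 L (by
      intro p hp
      rw [hb p hp, kill_of_self]; rfl)
    rw [← hv]
    exact map_nc_one (kill c) hvN h1

theorem tor_main (L : List (A × Bool))
    (IH : ∀ (X : Type u) (M : List (X × Bool)), M.length < L.length → Frei (mk M) ∧ Tor (mk M))
    (hF : Frei (mk L)) (base : ∀ (t : A) (k : ℤ), k ≠ 0 → Tor (of t ^ k)) : Tor (mk L) := by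
  by_cases hnil : L = []
  · subst hnil
    rw [← FreeGroup.one_eq_mk]
    exact tor_one
  obtain ⟨p0, hp0⟩ := List.exists_mem_of_ne_nil L hnil
  obtain ⟨t, ht⟩ : ∃ t, t = p0.1 := ⟨_, rfl⟩
  have htL : ∃ p ∈ L, p.1 = t := ⟨p0, hp0, ht.symm⟩
  by_cases h0 : ex t (mk L) = 1
  · exact (zero_case t L htL h0 IH).2
  have hα : (ex t (mk L)).toAdd ≠ 0 := fun h => h0 (Multiplicative.toAdd.injective h)
  by_cases hb : ∃ p ∈ L, p.1 ≠ t
  · obtain ⟨p, hp, hpt⟩ := hb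
    have key := (psi_step (b := p.1) (c := t) (Ne.symm hpt) L ⟨p, hp, rfl⟩ IH).2
    generalize (ex t (mk L)).toAdd = α at key hα
    generalize (ex p.1 (mk L)).toAdd = β at key
    generalize p.1 = b at key hpt
    generalize mk L = w at *
    intro g k hk hg
    by_cases hgN : g ∈ normalClosure {w}
    · exact ⟨1, 1, by simp, by simpa using hgN⟩
    obtain ⟨s, h, hs, hh⟩ := key (psi b t α β g) k hk (by
      rw [← map_pow]; exact map_nc _ hg (mem_nc _))
    -- the element `s` comes from the free group
    let id' := MonoidHom.id (FreeGroup A)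
    have hw := theta_psi (f := id') (Ne.symm hpt) α β rfl w
    obtain ⟨σ, hσ⟩ := am_conj (of_zpow_eq_one b) hα w w (by
      intro y n hy
      have := congrArg (ex t) hy
      rw [ex_pow_ne hpt] at this
      apply h0
      simpa using this) (theta (of b) id' b t α β s) (by
      have := congrArg (theta (of b) id' b t α β) hs
      rw [map_mul, map_mul] at this
      change theta (of b) id' b t α β (psi b t α β w) = am (of b) α true w at hw
      rw [hw] at this
      rw [this, mul_assoc, mul_inv_cancel, mul_one])
    have hσw : σ * w = w * σ := by
      apply am_inj (of_zpow_eq_one b) hα true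
      have := congrArg (theta (of b) id' b t α β) hs
      rw [map_mul, map_mul] at this
      change theta (of b) id' b t α β (psi b t α β w) = am (of b) α true w at hw
      rw [hw, hσ] at this
      rw [map_mul, map_mul, this]
    -- pass to the one-relator group
    let q : FreeGroup A →* FreeGroup A ⧸ normalClosure {w} := QuotientGroup.mk' _
    have hq : ∀ z, q z = 1 ↔ z ∈ normalClosure {w} := fun z => QuotientGroup.eq_one_iff z
    have hqb : ∀ n : ℤ, q (of b) ^ n = 1 → n = 0 := by
      intro n hn
      rw [← map_zpow, hq] at hn
      exact of_zpow_eq_one b n (hF t (ess_of_ex h0) _ (by rw [map_zpow, kill_of_ne hpt]) hn)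
    have hth : ∀ z, theta (q (of b)) q b t α β (psi b t α β z) = am (q (of b)) α true (q z) :=
      theta_psi (Ne.symm hpt) α β rfl
    have hsG : theta (q (of b)) q b t α β s = am (q (of b)) α true (q σ) := by
      have h1 := amMap_theta q (of b) id' b t α β s
      rw [hσ, amMap_am] at h1
      rw [h1]; rfl
    have hhG : theta (q (of b)) q b t α β h * am (q (of b)) α true (q g) *
        (theta (q (of b)) q b t α β h)⁻¹ = am (q (of b)) α true (q σ) := by
      have h1 := map_nc_one (theta (q (of b)) q b t α β) hh (by
        rw [hth, (hq w).2 (mem_nc w), map_one])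
      rw [map_mul, map_mul, map_mul, map_inv, map_inv, hth, hsG] at h1
      exact mul_inv_eq_one.1 h1
    obtain ⟨y, hy⟩ := am_conj hqb hα (q g) (q σ) (by
      intro y n hyn
      have h1 : (y * q g * y⁻¹) ^ k = 1 := by
        rw [conj_pow, ← map_pow, (hq _).2 hg]; simp
      rw [hyn, ← zpow_natCast, ← zpow_mul] at h1
      have h2 := hqb _ h1
      have h3 : n = 0 := by
        rcases mul_eq_zero.1 h2 with h | h
        · exact h
        · omega
      rw [h3, zpow_zero] at hyn
      apply hgN
      rw [← hq]
      exact conj_eq_one_iff.1 hyn) _ hhG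
    obtain ⟨y0, rfl⟩ := QuotientGroup.mk'_surjective _ y
    refine ⟨σ, y0, hσw, ?_⟩
    rw [← hq]
    change theta (q (of b)) q b t α β h = am (q (of b)) α true (q y0) at hy
    rw [hy, ← map_inv, ← map_mul, ← map_mul] at hhG
    have := am_inj hqb hα true hhG
    rw [map_mul, map_mul, map_mul, map_inv, map_inv, this, mul_inv_cancel]
  · push Not at hb
    have h1 : mk L = of t ^ (ex t (mk L)).toAdd :=
      hom_eq_on (MonoidHom.id _) ((zpowersHom _ (of t)).comp (ex t)) L (by
        intro p hp
        rw [hb p hp, MonoidHom.comp_apply, ex_self]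
        simp)
    rw [h1]
    exact base t _ hα
end AmalgamTwo

section BaseCase
open FreeGroup (of mk)
open Subgroup (normalClosure normalClosure_normal subset_normalClosure normalClosure_le_normal)
universe u

/-- The torsion statement for a single element, relator a power of a letter. -/
def Bs {X : Type u} (x : X) (k : ℤ) (g : FreeGroup X) : Prop :=
  ∀ n : ℕ, 1 ≤ n → g ^ n ∈ normalClosure {of x ^ k} →
    ∃ (h : FreeGroup X) (i : ℤ), h * g * h⁻¹ * (of x ^ i)⁻¹ ∈ normalClosure {of x ^ k}

theorem bs_transfer {X Y : Type u} {x : X} {y : Y} {k : ℤ} {g : FreeGroup X}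
    (j : FreeGroup X →* FreeGroup Y) (e : FreeGroup Y →* FreeGroup X) (hj : j (of x) = of y)
    (he : e (of y) = of x) (hej : e (j g) = g) (h : Bs y k (j g)) : Bs x k g := by
  intro n hn hg
  obtain ⟨a, i, hi⟩ := h n hn (by
    rw [← map_pow]
    exact map_nc j hg (by rw [map_zpow, hj]; exact mem_nc _))
  refine ⟨e a, i, ?_⟩
  have := map_nc e hi (N := normalClosure {of x ^ k}) (by rw [map_zpow, he]; exact mem_nc _)
  rwa [map_mul, map_mul, map_mul, map_inv, map_inv, hej, map_zpow, he] at this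

theorem bs_option {B : Type u} (IH : ∀ (k : ℤ) (g : FreeGroup (Option B)), Bs none k g) (k : ℤ)
    (g : FreeGroup (Option (Option B))) : Bs none k g := by
  intro n hn hg
  let N := normalClosure {(of (none : Option B)) ^ k}
  let N' := normalClosure {(of (none : Option (Option B))) ^ k}
  let q : FreeGroup (Option B) →* FreeGroup (Option B) ⧸ N := QuotientGroup.mk' N
  let q' : FreeGroup (Option (Option B)) →* FreeGroup (Option (Option B)) ⧸ N' := QuotientGroup.mk' N'
  have hq : ∀ x, q x = 1 ↔ x ∈ N := fun x => QuotientGroup.eq_one_iff x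
  have hq' : ∀ x, q' x = 1 ↔ x ∈ N' := fun x => QuotientGroup.eq_one_iff x
  let P := HNNExtension (FreeGroup (Option B) ⧸ N) ⊥ ⊥ (MulEquiv.refl _)
  let ι : (FreeGroup (Option B) ⧸ N) →* P := HNNExtension.of
  let j : FreeGroup (Option B) →* FreeGroup (Option (Option B)) := FreeGroup.map (Option.map some)
  let Φ : FreeGroup (Option (Option B)) →* P := FreeGroup.lift fun o =>
    match o with
    | none => ι (q (of none))
    | some none => HNNExtension.t
    | some (some b) => ι (q (of (some b)))
  let Ψ : P →* FreeGroup (Option (Option B)) ⧸ N' := HNNExtension.lift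
    (QuotientGroup.lift N (q'.comp j) (by
      intro x hx
      exact map_nc_one (q'.comp j) hx (by
        rw [MonoidHom.comp_apply, map_zpow, hq']
        exact mem_nc _))) (q' (of (some none))) (by
      rintro ⟨a, ha⟩
      have : a = 1 := by simpa using ha
      subst this
      have h2 : ((MulEquiv.refl (⊥ : Subgroup (FreeGroup (Option B) ⧸ N)) ⟨1, ha⟩ : (⊥ : Subgroup (FreeGroup (Option B) ⧸ N))) :
        FreeGroup (Option B) ⧸ N) = 1 := rfl
      rw [h2]
      simp)
  have hΨι : ∀ x, Ψ (ι (q x)) = q' (j x) := by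
    intro x
    exact HNNExtension.lift_of _ _ _ _
  have hΨΦ : ∀ x, Ψ (Φ x) = q' x := by
    intro x
    have : Ψ.comp Φ = q' := by
      ext o
      rcases o with _ | _ | b
      · simp [Φ, hΨι, j]
      · have ht : Ψ HNNExtension.t = q' (of (some none)) := HNNExtension.lift_t _ _ _
        simp [Φ, ht]
      · simp [Φ, hΨι, j]
    exact DFunLike.congr_fun this x
  have hΦg : Φ g ^ n = 1 := by
    rw [← map_pow]
    refine map_nc_one Φ hg ?_
    have : Φ (of none) = ι (q (of none)) := by simp [Φ]
    rw [map_zpow, this, ← map_zpow, ← map_zpow, (hq _).2 (mem_nc _), map_one]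
  obtain ⟨p, h, hp⟩ := hnn_torsion (Φ g) n hn hΦg
  obtain ⟨x, rfl⟩ := QuotientGroup.mk'_surjective _ h
  change Φ g = p * ι (q x) * p⁻¹ at hp
  have hx : x ^ n ∈ N := by
    rw [← hq, map_pow]
    apply HNNExtension.of_injective (φ := MulEquiv.refl (⊥ : Subgroup (FreeGroup (Option B) ⧸ N)))
    change ι _ = ι _
    rw [hp, conj_pow] at hΦg
    rw [map_pow, map_one]
    exact conj_eq_one_iff.1 hΦg
  obtain ⟨a, i, hi⟩ := IH k x n hn hx
  obtain ⟨y, hy⟩ := QuotientGroup.mk'_surjective _ (Ψ p)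
  change q' y = Ψ p at hy
  have h1 := congrArg Ψ hp
  rw [hΨΦ, map_mul, map_mul, map_inv, hΨι, ← hy] at h1
  have h2 : q' (j (a * x * a⁻¹ * (of none ^ i)⁻¹)) = 1 := by
    rw [← hΨι, (hq _).2 hi, map_one, map_one]
  have hj : j (of none) = of none := by simp [j]
  refine ⟨j a * y⁻¹, i, ?_⟩
  change _ ∈ N'
  rw [← hq']
  simp only [map_mul, map_inv, map_zpow, hj] at h2 ⊢
  rw [← h2, h1]; group

theorem bs_finite (B : Type u) [Finite B] : ∀ (k : ℤ) (g : FreeGroup (Option B)), Bs none k g := by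
  refine Finite.induction_empty_option
    (P := fun B : Type u => ∀ (k : ℤ) (g : FreeGroup (Option B)), Bs none k g) ?_ ?_ ?_ B
  · intro X Y f h k g
    refine bs_transfer (FreeGroup.map (Option.map f.symm)) (FreeGroup.map (Option.map f)) (by simp)
      (by simp) ?_ (h k _)
    have : (FreeGroup.map (Option.map f)).comp (FreeGroup.map (Option.map f.symm)) = MonoidHom.id _ := by
      ext o
      rcases o with _ | b <;> simp
    exact DFunLike.congr_fun this g
  · intro k g n hn hg
    refine ⟨1, (ex none g).toAdd, ?_⟩
    have : MonoidHom.id _ = (zpowersHom _ (of none)).comp (ex (none : Option PEmpty)) := by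
      ext o
      rcases o with _ | b
      · simp [ex_self]
      · exact b.elim
    have h : g = of none ^ (ex none g).toAdd := DFunLike.congr_fun this g
    rw [← h]; simp
  · intro X _ h
    exact bs_option h

theorem tor_base {A : Type u} (t : A) (k : ℤ) : Tor (of t ^ k) := by
  classical
  intro g n hn hg
  obtain ⟨L, rfl⟩ : ∃ L, g = mk L := ⟨g.toWord, FreeGroup.mk_toWord.symm⟩
  let B := {z // z ∈ (L.map Prod.fst).toFinset}
  let j : FreeGroup A →* FreeGroup (Option B) := FreeGroup.lift fun z =>
    if z = t then of none else if h : z ∈ (L.map Prod.fst).toFinset then of (some ⟨z, h⟩) else 1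
  let e : FreeGroup (Option B) →* FreeGroup A := FreeGroup.lift fun o => o.elim (of t) fun z => of z.1
  have hb : Bs t k (mk L) := by
    refine bs_transfer j e (by simp [j]) (by simp [e]) ?_ (bs_finite B k _)
    refine hom_eq_on (e.comp j) (MonoidHom.id _) L ?_
    intro p hp
    have hm : p.1 ∈ (L.map Prod.fst).toFinset := List.mem_toFinset.2 (List.mem_map_of_mem hp)
    by_cases h : p.1 = t
    · simp [j, e, h]
    · simp only [j, MonoidHom.comp_apply, FreeGroup.lift_apply_of, h, if_false, hm, dif_pos]
      simp [e]
  obtain ⟨h, i, hi⟩ := hb n hn hg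
  exact ⟨of t ^ i, h, by rw [← zpow_add, ← zpow_add, add_comm], hi⟩

theorem main_ind (ℓ : ℕ) : ∀ (A : Type u) (L : List (A × Bool)), L.length ≤ ℓ →
    Frei (mk L) ∧ Tor (mk L) := by
  induction ℓ using Nat.strong_induction_on with
  | _ ℓ ih =>
    intro A L hL
    have IH : ∀ (X : Type u) (M : List (X × Bool)), M.length < L.length → Frei (mk M) ∧ Tor (mk M) :=
      fun X M hM => ih M.length (by omega) X M le_rfl
    have hF := frei_main L IH
    exact ⟨hF, tor_main L IH hF fun t k _ => tor_base t k⟩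
end BaseCase

section Final
open FreeGroup (of mk reduce)
open Subgroup (normalClosure normalClosure_normal subset_normalClosure normalClosure_le_normal)
universe u

theorem eq_one_of_central {X : Type u} {x y : X} (hxy : x ≠ y) (z : FreeGroup X)
    (hx : of x * z = z * of x) (hy : of y * z = z * of y) : z = 1 := by
  classical
  by_contra hz
  obtain ⟨p, M, hM⟩ : ∃ p M, z.toWord = p :: M := by
    cases h : z.toWord with
    | nil => exact absurd (FreeGroup.toWord_eq_nil_iff.1 h) hz
    | cons p M => exact ⟨p, M, rfl⟩
  obtain ⟨c, hc, hcz⟩ : ∃ c, c ≠ p.1 ∧ of c * z = z * of c := by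
    by_cases h : x = p.1
    · exact ⟨y, fun h' => hxy (h.trans h'.symm), hy⟩
    · exact ⟨x, h, hx⟩
  have h1 : (of c * z).toWord = (c, true) :: p :: M := by
    have h2 : of c * z = mk ((c, true) :: z.toWord) := by
      rw [mk_cons, FreeGroup.mk_toWord]; rfl
    rw [h2, FreeGroup.toWord_mk, FreeGroup.reduce.cons, FreeGroup.reduce_toWord, hM]
    simp [hc]
  have h3 : z * of c = mk (p :: M ++ [(c, true)]) := by
    rw [← FreeGroup.mul_mk, ← hM, FreeGroup.mk_toWord]; rfl
  rw [hcz, h3, FreeGroup.toWord_mk] at h1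
  have h4 : (reduce (p :: M ++ [(c, true)])).Sublist (p :: M ++ [(c, true)]) :=
    FreeGroup.Red.sublist FreeGroup.reduce.red
  have h5 := h4.eq_of_length (by rw [h1]; simp)
  rw [h1] at h5
  simp only [List.cons_append, List.cons.injEq] at h5
  exact hc (congrArg Prod.fst h5.1)

theorem root_centralizer {A : Type u} (r : FreeGroup A) (hr : r ≠ 1)
    (hpow : ¬ ∃ (s : FreeGroup A) (k : ℕ), 2 ≤ k ∧ r = s ^ k) (n : ℕ) (hn : 2 ≤ n)
    (s : FreeGroup A) (hs : s * r ^ n = r ^ n * s) : ∃ i : ℤ, s = r ^ i := by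
  let Z := Subgroup.centralizer ({r ^ n} : Set (FreeGroup A))
  have hZ : ∀ z, z ∈ Z ↔ z * r ^ n = r ^ n * z := by
    intro z
    simp only [Z, Subgroup.mem_centralizer_singleton_iff]
  let w : Z := ⟨r ^ n, (hZ _).2 rfl⟩
  have hw : w ≠ 1 := by
    intro h
    have : r ^ n = 1 := congrArg Subtype.val h
    exact hr ((pow_eq_one_iff_left (by omega)).1 this)
  let φ := IsFreeGroup.toFreeGroup Z
  have hcen : ∀ x, of x * φ w = φ w * of x := by
    intro x
    obtain ⟨z, hz⟩ := φ.surjective (of x)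
    rw [← hz, ← map_mul, ← map_mul]
    congr 1
    exact Subtype.ext ((hZ _).1 z.2)
  have hsub : Subsingleton (IsFreeGroup.Generators Z) := by
    refine ⟨fun x y => ?_⟩
    by_contra hxy
    exact hw (φ.injective (by rw [map_one]; exact eq_one_of_central hxy _ (hcen x) (hcen y)))
  have hne : Nonempty (IsFreeGroup.Generators Z) := by
    by_contra h
    rw [not_nonempty_iff] at h
    exact hw (φ.injective (Subsingleton.elim _ _))
  obtain ⟨x0⟩ := hne
  have : Unique (IsFreeGroup.Generators Z) := ⟨⟨x0⟩, fun _ => Subsingleton.elim _ _⟩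
  obtain ⟨c, hc⟩ := IsCyclic.exists_generator (α := FreeGroup (IsFreeGroup.Generators Z))
  have hc' : ∀ z ∈ Z, ∃ m : ℤ, z = (φ.symm c : Z).1 ^ m := by
    intro z hz
    obtain ⟨m, hm⟩ := hc (φ ⟨z, hz⟩)
    refine ⟨m, ?_⟩
    have h1 : φ.symm (c ^ m) = ⟨z, hz⟩ := by
      rw [← φ.symm_apply_apply ⟨z, hz⟩]
      exact congrArg φ.symm hm
    rw [map_zpow] at h1
    exact (congrArg Subtype.val h1).symm
  generalize (φ.symm c : Z).1 = d at hc'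
  obtain ⟨p, hp⟩ := hc' r ((hZ r).2 (by rw [← pow_succ, ← pow_succ']))
  obtain ⟨m, hm⟩ := hc' s ((hZ s).2 hs)
  have hp1 : p = 1 ∨ p = -1 := by
    by_contra hcon
    have hp0 : p ≠ 0 := by
      rintro rfl
      exact hr (by simpa using hp)
    apply hpow
    rcases le_or_gt 0 p with h | h
    · refine ⟨d, p.toNat, by omega, ?_⟩
      rw [hp, ← zpow_natCast, Int.toNat_of_nonneg h]
    · refine ⟨d⁻¹, (-p).toNat, by omega, ?_⟩
      rw [hp, ← zpow_natCast, Int.toNat_of_nonneg (by omega), inv_zpow, zpow_neg, inv_inv]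
  rcases hp1 with rfl | rfl
  · exact ⟨m, by rw [hm, hp, zpow_one]⟩
  · exact ⟨-m, by rw [hm, hp, ← zpow_mul]; simp⟩

theorem final_form {A : Type u} (r : FreeGroup A) (hr : r ≠ 1)
    (hpow : ¬ ∃ (s : FreeGroup A) (k : ℕ), 2 ≤ k ∧ r = s ^ k) (n : ℕ) (hn : 2 ≤ n)
    (g : PresentedGroup ({r ^ n} : Set (FreeGroup A)))
    (k : ℕ) (hk : 1 ≤ k) (hg : g ^ k = 1) :
    ∃ (h : PresentedGroup ({r ^ n} : Set (FreeGroup A))) (i : ℤ),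
      g = h * (PresentedGroup.mk ({r ^ n} : Set (FreeGroup A)) r) ^ i * h⁻¹ := by
  classical
  let q := PresentedGroup.mk ({r ^ n} : Set (FreeGroup A))
  have hq : ∀ x, q x = 1 ↔ x ∈ normalClosure {r ^ n} := fun x => QuotientGroup.eq_one_iff x
  obtain ⟨g, rfl⟩ := PresentedGroup.mk_surjective _ g
  change q g ^ k = 1 at hg
  rw [← map_pow, hq] at hg
  have hT : Tor (r ^ n) := by
    have := (main_ind (r ^ n).toWord.length A (r ^ n).toWord le_rfl).2
    rwa [FreeGroup.mk_toWord] at this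
  obtain ⟨s, h, hs, hh⟩ := hT g k hk hg
  obtain ⟨i, rfl⟩ := root_centralizer r hr hpow n hn s hs
  refine ⟨(q h)⁻¹, i, ?_⟩
  rw [← hq] at hh
  simp only [map_mul, map_inv, map_zpow] at hh
  have := mul_inv_eq_one.1 hh
  change q g = (q h)⁻¹ * q r ^ i * ((q h)⁻¹)⁻¹
  rw [← this]; group
end Final

end OneRel

/-- **Karrass–Magnus–Solitar (1960), torsion elements:** in the one-relator group
with torsion `⟨A ∣ rⁿ = 1⟩`, every element of finite order is conjugate to a power
of the image of `r`. -/
theorem one_relator_torsion_elements_conjugate_to_power {A : Type*} [DecidableEq A]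
    (r : FreeGroup A) (hr : r ≠ 1) (hcyc : FreeGroup.CyclicallyReduced r)
    (hpow : ¬ ∃ (s : FreeGroup A) (k : ℕ), 2 ≤ k ∧ r = s ^ k)
    (n : ℕ) (hn : 2 ≤ n)
    (g : PresentedGroup ({r ^ n} : Set (FreeGroup A)))
    (k : ℕ) (hk : 1 ≤ k) (hg : g ^ k = 1) :
    ∃ (h : PresentedGroup ({r ^ n} : Set (FreeGroup A))) (i : ℤ),
      g = h * (PresentedGroup.mk ({r ^ n} : Set (FreeGroup A)) r) ^ i * h⁻¹ := by
  exact OneRel.final_form r hr hpow n hn g k hk hg
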